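/- Suppose ν is pure and centered at m, where k is the type and λ the strength of the minimum m of G, and suppose ν has a finite second moment. Then for μ-almost every realization h and every α with 1 − 1/(2(2k−1)) < α < 1, the sequence of laws of (S_n − n m)/n^α under P_{n,β}^h satisfies a moderate deviations principle with speed n^{1−2k(1−α)} and rate function I(x) = x²/(2σ²) with σ² = λ^{−1} − β^{−1} if k = 1, and I(x) = λ x^{2k}/(2k)! if k ≥ 2. -/

import Mathlib

open MeasureTheory ProbabilityTheory Real Filter Topology
open scoped ENNReal NNReal

noncomputable section

/-- The value of a spin encoded as a Boolean. -/
def spin (b : Bool) : ℝ := if b then 1 else -1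

/-- Total magnetization of a configuration. -/
def mag {n : ℕ} (σ : Fin n → Bool) : ℝ := ∑ i, spin (σ i)

/-- Gibbs weight of a configuration in the random field Curie-Weiss model. -/
def gibbsWeight (β : ℝ) (h : ℕ → ℝ) (n : ℕ) (σ : Fin n → Bool) : ℝ :=
  Real.exp (β / (2 * n) * (mag σ) ^ 2 + β * ∑ i : Fin n, h i * spin (σ i))

/-- The random field Curie-Weiss Gibbs measure on configurations. -/
def gibbsMeasure (β : ℝ) (h : ℕ → ℝ) (n : ℕ) : Measure (Fin n → Bool) :=
  (ENNReal.ofReal (∑ σ : Fin n → Bool, gibbsWeight β h n σ))⁻¹ •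
    ∑ σ : Fin n → Bool, ENNReal.ofReal (gibbsWeight β h n σ) • Measure.dirac σ

/-- `μ` is the infinite product of `ν` over `ℕ` (characterised by finite marginals). -/
def IsProductMeasure (ν : Measure ℝ) (μ : Measure (ℕ → ℝ)) : Prop :=
  ∀ n : ℕ, μ.map (fun h (i : Fin n) => h (i : ℕ)) = Measure.pi fun _ : Fin n => ν

/-- extended logarithm, `elog 0 = ⊥`, `elog ⊤ = ⊤`. -/
def elog (x : ℝ≥0∞) : EReal :=
  if x = 0 then ⊥ else if x = ⊤ then ⊤ else ((Real.log x.toReal : ℝ) : EReal)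

/-- A sequence of measures satisfies a large deviations principle with given speed and
rate function. -/
def HasLDP (P : ℕ → Measure ℝ) (speed : ℕ → ℝ) (I : ℝ → ℝ≥0∞) : Prop :=
  LowerSemicontinuous I ∧ (∀ c : ℝ, IsCompact {x : ℝ | I x ≤ ENNReal.ofReal c}) ∧
    ∀ C : Set ℝ, MeasurableSet C →
      -(⨅ x ∈ interior C, (I x : EReal)) ≤
          liminf (fun n => ((((speed n)⁻¹ : ℝ) : EReal)) * elog (P n C)) atTop ∧
        limsup (fun n => ((((speed n)⁻¹ : ℝ) : EReal)) * elog (P n C)) atTop ≤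
          -(⨅ x ∈ closure C, (I x : EReal))

/-- The function `G` of the random field Curie-Weiss model. -/
def G (β : ℝ) (ν : Measure ℝ) (x : ℝ) : ℝ :=
  β / 2 * x ^ 2 - ∫ h, Real.log (Real.cosh (β * (x + h))) ∂ν

/-- The finite-volume function `G_n^h`. -/
def Gn (β : ℝ) (h : ℕ → ℝ) (n : ℕ) (x : ℝ) : ℝ :=
  β / 2 * x ^ 2 - (1 / n) * ∑ i : Fin n, Real.log (Real.cosh (β * (x + h i)))

/-- `m` is a (local or global) minimum of `G` of type `k` and strength `l`. -/
def IsMinOfType (β : ℝ) (ν : Measure ℝ) (m : ℝ) (k : ℕ) (l : ℝ) : Prop :=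
  1 ≤ k ∧ 0 < l ∧ (∀ i : ℕ, 1 ≤ i → i ≤ 2 * k - 1 → iteratedDeriv i (G β ν) m = 0) ∧
    iteratedDeriv (2 * k) (G β ν) m = l

/-- The height of a minimum `m` of `G`. -/
def height (β : ℝ) (ν : Measure ℝ) (m : ℝ) : ℝ := G β ν m - ⨅ w, G β ν w

/-- The broadness of a minimum `m` of `G`. -/
def broadness (β : ℝ) (ν : Measure ℝ) (m : ℝ) : ℝ :=
  sInf ((fun y => |y - m|) '' {y | G β ν y < G β ν m})

/-- The moderate deviations rate function. -/
def mdpRate (β l : ℝ) (k : ℕ) (x : ℝ) : ℝ≥0∞ :=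
  if k = 1 then ENNReal.ofReal (x ^ 2 / (2 * (l⁻¹ - β⁻¹)))
  else ENNReal.ofReal (l * x ^ (2 * k) / (Nat.factorial (2 * k)))

/-- The polynomial `P_{2k}`. -/
def P2k (l : ℝ) (k : ℕ) (s : ℝ) : ℝ :=
  l / (2 * (Nat.factorial (2 * k))) * s ^ (2 * k) - ∑ i ∈ Finset.Icc 1 (2 * k - 1), |s| ^ i


lemma tanh_abs_le (x : ℝ) : |Real.tanh x| ≤ 1 := by
  rw [abs_le]
  exact ⟨(Real.neg_one_lt_tanh x).le, (Real.tanh_lt_one x).le⟩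

lemma hasDerivAt_tanh' (x : ℝ) : HasDerivAt Real.tanh (1 - Real.tanh x ^ 2) x := by
  have h := (Real.hasDerivAt_sinh x).div (Real.hasDerivAt_cosh x) (Real.cosh_pos x).ne'
  have he : Real.tanh = Real.sinh / Real.cosh := by
    ext y; simp [Real.tanh_eq_sinh_div_cosh]
  rw [← he] at h
  refine h.congr_deriv ?_
  have := (Real.cosh_pos x).ne'
  rw [Real.tanh_eq_sinh_div_cosh]
  field_simp

lemma continuous_tanh' : Continuous Real.tanh :=
  continuous_iff_continuousAt.2 fun x => (hasDerivAt_tanh' x).continuousAt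

lemma one_sub_tanh_sq_pos (x : ℝ) : 0 < 1 - Real.tanh x ^ 2 := by
  have h1 := Real.neg_one_lt_tanh x
  have h2 := Real.tanh_lt_one x
  nlinarith

lemma tanh_lip (x y : ℝ) : |Real.tanh x - Real.tanh y| ≤ |x - y| := by
  have := Convex.norm_image_sub_le_of_norm_hasDerivWithin_le (f := Real.tanh)
    (f' := fun x => 1 - Real.tanh x ^ 2) (C := 1) (s := Set.univ) (x := y) (y := x)
    (fun x _ => (hasDerivAt_tanh' x).hasDerivWithinAt)
    (fun x _ => by
      rw [Real.norm_eq_abs, abs_of_pos (one_sub_tanh_sq_pos x)]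
      nlinarith [sq_nonneg (Real.tanh x)]) convex_univ trivial trivial
  simpa using this

lemma hasDerivAt_logcosh (x : ℝ) :
    HasDerivAt (fun x => Real.log (Real.cosh x)) (Real.tanh x) x := by
  have h := (Real.hasDerivAt_cosh x).log (Real.cosh_pos x).ne'
  rwa [← Real.tanh_eq_sinh_div_cosh] at h

lemma logcosh_lip (x y : ℝ) :
    |Real.log (Real.cosh x) - Real.log (Real.cosh y)| ≤ |x - y| := by
  have := Convex.norm_image_sub_le_of_norm_hasDerivWithin_le
    (f := fun x => Real.log (Real.cosh x))
    (f' := Real.tanh) (C := 1) (s := Set.univ) (x := y) (y := x)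
    (fun x _ => (hasDerivAt_logcosh x).hasDerivWithinAt)
    (fun x _ => tanh_abs_le x) convex_univ trivial trivial
  simpa using this

lemma continuous_logcosh : Continuous (fun x => Real.log (Real.cosh x)) :=
  continuous_iff_continuousAt.2 fun x => (hasDerivAt_logcosh x).continuousAt

/-- Integral of a polynomial in `tanh`. -/
def polyInt (β : ℝ) (ν : Measure ℝ) (p : Polynomial ℝ) (y : ℝ) : ℝ :=
  ∫ h, p.eval (Real.tanh (β * (y + h))) ∂ν

lemma poly_bdd (p : Polynomial ℝ) : ∃ C, ∀ x, |p.eval (Real.tanh x)| ≤ C := by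
  obtain ⟨C, hC⟩ := (isCompact_Icc (a := (-1:ℝ)) (b := 1)).exists_bound_of_continuousOn
    (p.continuous.continuousOn)
  exact ⟨C, fun x => hC _ (abs_le.1 (tanh_abs_le x))⟩

lemma polyInt_hasDerivAt (β : ℝ) (ν : Measure ℝ) [IsProbabilityMeasure ν] (p : Polynomial ℝ)
    (y : ℝ) : HasDerivAt (polyInt β ν p)
      (polyInt β ν (Polynomial.derivative p * ((1 - Polynomial.X ^ 2) * Polynomial.C β)) y) y := by
  set q := Polynomial.derivative p * ((1 - Polynomial.X ^ 2) * Polynomial.C β) with hq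
  obtain ⟨C, hC⟩ := poly_bdd q
  obtain ⟨D, hD⟩ := poly_bdd p
  have hcont : ∀ (r : Polynomial ℝ) (x : ℝ),
      Continuous (fun h => r.eval (Real.tanh (β * (x + h)))) := fun r x =>
    r.continuous.comp (continuous_tanh'.comp (by fun_prop))
  refine (hasDerivAt_integral_of_dominated_loc_of_deriv_le (bound := fun _ => C)
    (F' := fun x h => q.eval (Real.tanh (β * (x + h)))) (Metric.ball_mem_nhds y one_pos)
    ?_ ?_ ?_ ?_ ?_ ?_).2
  · exact Eventually.of_forall fun x => (hcont p x).aestronglyMeasurable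
  · exact Integrable.of_bound (hcont p y).aestronglyMeasurable D
      (Eventually.of_forall fun h => hD _)
  · exact (hcont q y).aestronglyMeasurable
  · exact Eventually.of_forall fun h x _ => hC _
  · exact integrable_const _
  · refine Eventually.of_forall fun h x _ => ?_
    have h1 : HasDerivAt (fun x => β * (x + h)) β x := by
      simpa using ((hasDerivAt_id x).add_const h).const_mul β
    have h2 := (p.hasDerivAt (Real.tanh (β * (x + h)))).comp x
      ((hasDerivAt_tanh' (β * (x + h))).comp x h1)
    refine h2.congr_deriv ?_
    rw [hq]
    simp only [Polynomial.eval_mul, Polynomial.eval_sub,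
        Polynomial.eval_one, Polynomial.eval_pow, Polynomial.eval_X, Polynomial.eval_C]

lemma polyInt_contDiff (β : ℝ) (ν : Measure ℝ) [IsProbabilityMeasure ν] (n : ℕ) :
    ∀ p : Polynomial ℝ, ContDiff ℝ n (polyInt β ν p) := by
  induction n with
  | zero =>
    intro p
    simp only [Nat.cast_zero, contDiff_zero]
    exact continuous_iff_continuousAt.2 fun x => (polyInt_hasDerivAt β ν p x).continuousAt
  | succ n ih =>
    intro p
    push_cast
    rw [contDiff_succ_iff_deriv]
    refine ⟨fun x => (polyInt_hasDerivAt β ν p x).differentiableAt, by simp, ?_⟩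
    have : deriv (polyInt β ν p) = polyInt β ν
        (Polynomial.derivative p * ((1 - Polynomial.X ^ 2) * Polynomial.C β)) :=
      funext fun x => (polyInt_hasDerivAt β ν p x).deriv
    rw [this]
    exact ih _

/-- mean of tanh -/
def Ft (β : ℝ) (ν : Measure ℝ) (y : ℝ) : ℝ := ∫ h, Real.tanh (β * (y + h)) ∂ν

lemma Ft_eq (β : ℝ) (ν : Measure ℝ) : Ft β ν = polyInt β ν Polynomial.X := by
  ext y; simp [Ft, polyInt]

lemma integrable_id_of_sq {ν : Measure ℝ} [IsProbabilityMeasure ν]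
    (hmom : Integrable (fun x : ℝ => x ^ 2) ν) : Integrable (fun x : ℝ => x) ν := by
  refine Integrable.mono' (hmom.add (integrable_const (1:ℝ))) (by fun_prop) ?_
  refine Eventually.of_forall fun x => ?_
  simp only [Real.norm_eq_abs, Pi.add_apply]
  nlinarith [sq_abs x, sq_nonneg (|x| - 1), abs_nonneg x]

lemma integrable_logcosh (β : ℝ) {ν : Measure ℝ} [IsProbabilityMeasure ν]
    (hmom : Integrable (fun x : ℝ => x ^ 2) ν) (y : ℝ) :
    Integrable (fun h => Real.log (Real.cosh (β * (y + h)))) ν := by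
  have h1 : Integrable (fun h : ℝ => β * (y + h)) ν :=
    ((integrable_const y).add (integrable_id_of_sq hmom)).const_mul β
  refine Integrable.mono h1
    (continuous_logcosh.comp (by fun_prop)).aestronglyMeasurable ?_
  refine Eventually.of_forall fun h => ?_
  have := logcosh_lip (β * (y + h)) 0
  simpa using this

lemma G_hasDerivAt (β : ℝ) {ν : Measure ℝ} [IsProbabilityMeasure ν]
    (hmom : Integrable (fun x : ℝ => x ^ 2) ν) (y : ℝ) :
    HasDerivAt (G β ν) (β * y - β * Ft β ν y) y := by
  have h1 : HasDerivAt (fun x => ∫ h, Real.log (Real.cosh (β * (x + h))) ∂ν)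
      (∫ h, β * Real.tanh (β * (y + h)) ∂ν) y := by
    refine (hasDerivAt_integral_of_dominated_loc_of_deriv_le (bound := fun _ => |β|)
      (F' := fun x h => β * Real.tanh (β * (x + h))) (Metric.ball_mem_nhds y one_pos)
      ?_ ?_ ?_ ?_ ?_ ?_).2
    · exact Eventually.of_forall fun x => (integrable_logcosh β hmom x).aestronglyMeasurable
    · exact integrable_logcosh β hmom y
    · exact (continuous_const.mul (continuous_tanh'.comp (by fun_prop))).aestronglyMeasurable
    · refine Eventually.of_forall fun h x _ => ?_
      rw [norm_mul, Real.norm_eq_abs, Real.norm_eq_abs]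
      exact mul_le_of_le_one_right (abs_nonneg _) (tanh_abs_le _)
    · exact integrable_const _
    · refine Eventually.of_forall fun h x _ => ?_
      have h1 : HasDerivAt (fun x => β * (x + h)) β x := by
        simpa using ((hasDerivAt_id x).add_const h).const_mul β
      have h2 := (hasDerivAt_logcosh (β * (x + h))).comp x h1
      rw [mul_comm]
      exact h2
  have h2 : HasDerivAt (fun x : ℝ => β / 2 * x ^ 2) (β * y) y := by
    have := ((hasDerivAt_id y).pow 2).const_mul (β / 2)
    refine this.congr_deriv ?_
    simp only [id]; ring
  rw [integral_const_mul] at h1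
  exact h2.sub h1

lemma G_deriv (β : ℝ) {ν : Measure ℝ} [IsProbabilityMeasure ν]
    (hmom : Integrable (fun x : ℝ => x ^ 2) ν) :
    deriv (G β ν) = fun y => β * y - β * Ft β ν y :=
  funext fun y => (G_hasDerivAt β hmom y).deriv

lemma G_contDiff (β : ℝ) {ν : Measure ℝ} [IsProbabilityMeasure ν]
    (hmom : Integrable (fun x : ℝ => x ^ 2) ν) (n : ℕ) : ContDiff ℝ n (G β ν) := by
  suffices h : ContDiff ℝ ((n : WithTop ℕ∞) + 1) (G β ν) from h.of_le (by
    exact le_self_add)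
  rw [contDiff_succ_iff_deriv]
  refine ⟨fun x => (G_hasDerivAt β hmom x).differentiableAt, by simp, ?_⟩
  rw [G_deriv β hmom]
  have := polyInt_contDiff β ν n Polynomial.X
  rw [← Ft_eq] at this
  fun_prop

lemma strength_lt (β : ℝ) (hβ : 0 < β) {ν : Measure ℝ} [IsProbabilityMeasure ν]
    (hmom : Integrable (fun x : ℝ => x ^ 2) ν) (m : ℝ) :
    iteratedDeriv 2 (G β ν) m < β := by
  rw [iteratedDeriv_succ, iteratedDeriv_one, G_deriv β hmom]
  have h0 := polyInt_hasDerivAt β ν Polynomial.X m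
  rw [← Ft_eq] at h0
  have h1 : HasDerivAt (fun y => β * y - β * Ft β ν y) _ m :=
    ((hasDerivAt_id m).const_mul β).sub (h0.const_mul β)
  rw [h1.deriv]
  have : 0 < polyInt β ν (Polynomial.derivative Polynomial.X * ((1 - Polynomial.X ^ 2) * Polynomial.C β)) m := by
    unfold polyInt
    rw [integral_pos_iff_support_of_nonneg]
    · have : (Function.support fun h => Polynomial.eval (Real.tanh (β * (m + h)))
        (Polynomial.derivative Polynomial.X * ((1 - Polynomial.X ^ 2) * Polynomial.C β))) = Set.univ := by
        ext h
        have := one_sub_tanh_sq_pos (β * (m + h))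
        simp only [Function.mem_support, Set.mem_univ, iff_true]
        simp [hβ.ne', this.ne']
      rw [this]; simp
    · intro h
      have := one_sub_tanh_sq_pos (β * (m + h))
      simp only [Polynomial.derivative_X, one_mul, Polynomial.eval_mul, Polynomial.eval_sub,
        Polynomial.eval_one, Polynomial.eval_pow, Polynomial.eval_X, Polynomial.eval_C, Pi.zero_apply]
      positivity
    · obtain ⟨C, hC⟩ := poly_bdd (Polynomial.derivative Polynomial.X * ((1 - Polynomial.X ^ 2) * Polynomial.C β))
      refine Integrable.of_bound (C := C) ?_ (Eventually.of_forall fun h => hC _)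
      exact ((Polynomial.continuous _).comp (continuous_tanh'.comp (by fun_prop))).aestronglyMeasurable
  nlinarith

lemma G_taylor (β : ℝ) {ν : Measure ℝ} [IsProbabilityMeasure ν]
    (hmom : Integrable (fun x : ℝ => x ^ 2) ν) (m : ℝ) (k : ℕ) (l : ℝ)
    (hmin : IsMinOfType β ν m k l) :
    Tendsto (fun u => (G β ν (m + u) - G β ν m) / u ^ (2 * k)) (𝓝[≠] 0)
      (𝓝 (l / (Nat.factorial (2 * k)))) := by
  obtain ⟨hk, hl, h0, h1⟩ := hmin
  have ht := Real.taylor_tendsto (f := G β ν) (x₀ := m) (n := 2 * k) convex_univ trivial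
    (G_contDiff β hmom (2 * k)).contDiffOn
  rw [nhdsWithin_univ] at ht
  have he : ∀ x, taylorWithinEval (G β ν) (2 * k) Set.univ m x
      = G β ν m + l / (Nat.factorial (2 * k)) * (x - m) ^ (2 * k) := by
    intro x
    rw [taylor_within_apply, Finset.sum_range_succ]
    congr 1
    · rw [Finset.sum_eq_single 0]
      · simp
      · intro i hi hi0
        rw [iteratedDerivWithin_univ, h0 i (by omega) (by simp at hi; omega)]
        simp
      · intro h; simp at h; omega
    · rw [iteratedDerivWithin_univ, h1, smul_eq_mul]
      ring
  have hc : Tendsto (fun u : ℝ => m + u) (𝓝[≠] 0) (𝓝 m) := by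
    have : Tendsto (fun u : ℝ => m + u) (𝓝 0) (𝓝 (m + 0)) := by
      apply Continuous.tendsto; fun_prop
    rw [add_zero] at this
    exact this.mono_left nhdsWithin_le_nhds
  have h2 := (ht.comp hc).add_const (l / (Nat.factorial (2 * k)))
  rw [zero_add] at h2
  refine h2.congr' ?_
  filter_upwards [self_mem_nhdsWithin] with u hu
  have hu : u ≠ 0 := hu
  simp only [Function.comp, he]
  have : m + u - m = u := by ring
  rw [this]
  field_simp
  ring
lemma integrable_tanh (β : ℝ) (ν : Measure ℝ) [IsProbabilityMeasure ν] (y : ℝ) :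
    Integrable (fun h => Real.tanh (β * (y + h))) ν :=
  Integrable.of_bound (C := 1) (continuous_tanh'.comp (by fun_prop)).aestronglyMeasurable
    (Eventually.of_forall fun _ => tanh_abs_le _)

lemma Ft_lip (β : ℝ) (hβ : 0 < β) (ν : Measure ℝ) [IsProbabilityMeasure ν] (x y : ℝ) :
    |Ft β ν x - Ft β ν y| ≤ β * |x - y| := by
  unfold Ft
  rw [← integral_sub (integrable_tanh β ν x) (integrable_tanh β ν y)]
  have := norm_integral_le_of_norm_le_const (μ := ν) (C := β * |x - y|)
    (f := fun a => Real.tanh (β * (x + a)) - Real.tanh (β * (y + a)))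
    (Eventually.of_forall fun a => by
      refine (tanh_lip _ _).trans (le_of_eq ?_)
      rw [← mul_sub, abs_mul, abs_of_pos hβ]
      congr 2; ring)
  simpa using this

lemma Ft_abs_le (β : ℝ) (ν : Measure ℝ) [IsProbabilityMeasure ν] (x : ℝ) :
    |Ft β ν x| ≤ 1 := by
  have := norm_integral_le_of_norm_le_const (μ := ν) (C := 1)
    (f := fun a => Real.tanh (β * (x + a))) (Eventually.of_forall fun a => tanh_abs_le _)
  unfold Ft
  simpa using this

/-- centered sum -/
def Dn (β : ℝ) (ν : Measure ℝ) (h : ℕ → ℝ) (n : ℕ) (y : ℝ) : ℝ :=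
  ∑ i : Fin n, (Real.tanh (β * (y + h i)) - Ft β ν y)

lemma subG_pi (ν : Measure ℝ) [IsProbabilityMeasure ν] (n : ℕ) (f : ℝ → ℝ)
    (hf : HasSubgaussianMGF f 1 ν) (i : Fin n) :
    HasSubgaussianMGF (fun ω : Fin n → ℝ => f (ω i)) 1 (Measure.pi fun _ : Fin n => ν) := by
  have hmp := measurePreserving_eval (fun _ : Fin n => ν) i
  have h2 : HasSubgaussianMGF f 1 ((Measure.pi fun _ : Fin n => ν).map (Function.eval i)) := by
    rw [hmp.map_eq]; exact hf
  exact HasSubgaussianMGF.of_map hmp.measurable.aemeasurable h2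

lemma hoeffding_pi (β : ℝ) (ν : Measure ℝ) [IsProbabilityMeasure ν] (n : ℕ) (y r : ℝ) (hr : 0 ≤ r)
    (s : ℝ) (hs : s = 1 ∨ s = -1) :
    (Measure.pi fun _ : Fin n => ν).real
      {h | r ≤ ∑ i : Fin n, s * (Real.tanh (β * (y + h i)) - Ft β ν y)} ≤
        Real.exp (- r ^ 2 / (2 * n)) := by
  have hm : Measurable (fun a => Real.tanh (β * (y + a))) :=
    (continuous_tanh'.comp (by fun_prop)).measurable
  have hsub : HasSubgaussianMGF (fun a => Real.tanh (β * (y + a)) - Ft β ν y) 1 ν := by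
    have := hasSubgaussianMGF_of_mem_Icc (μ := ν) (X := fun a => Real.tanh (β * (y + a)))
      (a := -1) (b := 1) hm.aemeasurable
      (Eventually.of_forall fun a => abs_le.1 (tanh_abs_le _))
    have e : ((‖(1:ℝ) - -1‖₊ / 2) ^ 2 : ℝ≥0) = 1 := by
      rw [← NNReal.coe_inj]; norm_num
    rw [e] at this
    exact this
  have hsub' : HasSubgaussianMGF (fun a => s * (Real.tanh (β * (y + a)) - Ft β ν y)) 1 ν := by
    rcases hs with rfl | rfl
    · simpa using hsub
    · have := hsub.neg
      convert this using 1
      ext a; simp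
  have hind : iIndepFun (fun (i : Fin n) (ω : Fin n → ℝ) =>
      s * (Real.tanh (β * (y + ω i)) - Ft β ν y)) (Measure.pi fun _ : Fin n => ν) :=
    iIndepFun_pi (μ := fun _ : Fin n => ν)
      (X := fun _ a => s * (Real.tanh (β * (y + a)) - Ft β ν y))
      (fun i => ((hm.sub_const _).const_mul s).aemeasurable)
  have := HasSubgaussianMGF.measure_sum_ge_le_of_iIndepFun hind (c := fun _ => 1)
    (s := Finset.univ) (fun i _ => subG_pi ν n _ hsub' i) hr
  simpa using this

lemma hoeffding_mu (β : ℝ) (ν : Measure ℝ) [IsProbabilityMeasure ν] (μ : Measure (ℕ → ℝ))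
    [IsProbabilityMeasure μ] (hμ : IsProductMeasure ν μ) (n : ℕ) (y r : ℝ) (hr : 0 ≤ r) :
    μ {h | r ≤ |Dn β ν h n y|} ≤ ENNReal.ofReal (2 * Real.exp (- r ^ 2 / (2 * n))) := by
  have hm : Measurable (fun a => Real.tanh (β * (y + a))) :=
    (continuous_tanh'.comp (by fun_prop)).measurable
  have key : ∀ s : ℝ, s = 1 ∨ s = -1 → μ {h | r ≤ s * Dn β ν h n y} ≤
      ENNReal.ofReal (Real.exp (- r ^ 2 / (2 * n))) := by
    intro s hs
    have h1 := hoeffding_pi β ν n y r hr s hs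
    have hmeas : MeasurableSet {h : Fin n → ℝ |
        r ≤ ∑ i : Fin n, s * (Real.tanh (β * (y + h i)) - Ft β ν y)} := by
      refine measurableSet_le measurable_const ?_
      refine Finset.measurable_sum _ fun i _ => ?_
      exact ((hm.comp (measurable_pi_apply i)).sub_const _).const_mul s
    rw [← hμ n, measureReal_def, Measure.map_apply (by fun_prop) hmeas] at h1
    have h2 := (ENNReal.le_ofReal_iff_toReal_le (measure_ne_top _ _) (by positivity)).2 h1
    refine le_trans (measure_mono ?_) h2
    intro h hh
    have hh : r ≤ s * Dn β ν h n y := hh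
    rw [Dn, Finset.mul_sum] at hh
    exact hh
  have hsub : {h | r ≤ |Dn β ν h n y|} ⊆
      {h | r ≤ 1 * Dn β ν h n y} ∪ {h | r ≤ (-1) * Dn β ν h n y} := by
    intro h hh
    simp only [Set.mem_ofPred_eq, le_abs] at hh
    simpa using hh
  refine (measure_mono hsub).trans ((measure_union_le _ _).trans ?_)
  refine (add_le_add (key 1 (Or.inl rfl)) (key (-1) (Or.inr rfl))).trans ?_
  rw [two_mul (Real.exp _), ENNReal.ofReal_add (by positivity) (by positivity)]

lemma summable_aux (p : ℝ) (hp : 0 < p) :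
    Summable (fun n : ℕ => ((n : ℝ) + 1) * (2 * Real.exp (-((n : ℝ) ^ p / 2)))) := by
  have h1 := tendsto_rpow_mul_exp_neg_mul_atTop_nhds_zero (3 / p) (1 / 2) (by norm_num)
  have h2 : Tendsto (fun n : ℕ => (n : ℝ) ^ p) atTop atTop :=
    (tendsto_rpow_atTop hp).comp tendsto_natCast_atTop_atTop
  have h3 := h1.comp h2
  have h4 : ∀ᶠ n : ℕ in atTop, ((n : ℝ) ^ p) ^ (3 / p) * Real.exp (-(1/2) * (n : ℝ) ^ p) < 1 :=
    h3.eventually (gt_mem_nhds one_pos)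
  refine Summable.of_norm_bounded_eventually_nat (g := fun n : ℕ => 4 * (1 / (n : ℝ) ^ 2))
    ((Real.summable_one_div_nat_pow.2 (by norm_num)).mul_left 4) ?_
  filter_upwards [h4, eventually_ge_atTop 1] with n hn hn1
  have hn1' : (1 : ℝ) ≤ n := by exact_mod_cast hn1
  rw [← Real.rpow_mul (by positivity), mul_div_cancel₀ _ hp.ne'] at hn
  have e3 : (n : ℝ) ^ (3 : ℝ) = n ^ 3 := by exact_mod_cast Real.rpow_natCast (n : ℝ) 3
  rw [e3] at hn
  have e : -(1/2) * (n : ℝ) ^ p = -((n : ℝ) ^ p / 2) := by ring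
  rw [e] at hn
  set E := Real.exp (-((n : ℝ) ^ p / 2)) with hE
  have hEp : 0 < E := Real.exp_pos _
  rw [Real.norm_eq_abs, abs_of_pos (by positivity), mul_one_div, le_div_iff₀ (by positivity)]
  have : ((n : ℝ) + 1) ≤ 2 * n := by linarith
  calc ((n : ℝ) + 1) * (2 * E) * (n : ℝ) ^ 2 ≤ (2 * n) * (2 * E) * (n : ℝ) ^ 2 := by gcongr
    _ = 4 * ((n : ℝ) ^ 3 * E) := by ring
    _ ≤ 4 := by linarith

lemma grid_ae (β : ℝ) (ν : Measure ℝ) [IsProbabilityMeasure ν] (μ : Measure (ℕ → ℝ))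
    [IsProbabilityMeasure μ] (hμ : IsProductMeasure ν μ) (g : ℕ → ℕ → ℝ) (ε : ℝ) (hε : 0 < ε) :
    ∀ᵐ h ∂μ, ∀ᶠ n : ℕ in atTop, ∀ i ∈ Finset.range (n + 1),
      |Dn β ν h n (g n i)| < (n : ℝ) ^ (1 / 2 + ε) := by
  have hbc := ae_eventually_notMem (μ := μ)
    (s := fun n : ℕ => ⋃ i ∈ Finset.range (n + 1),
      {h | (n : ℝ) ^ (1 / 2 + ε) ≤ |Dn β ν h n (g n i)|}) ?_
  · filter_upwards [hbc] with h hh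
    filter_upwards [hh] with n hn i hi
    by_contra hc
    exact hn (Set.mem_biUnion hi (not_lt.1 hc))
  · have hle : ∀ n : ℕ, μ (⋃ i ∈ Finset.range (n + 1),
      {h | (n : ℝ) ^ (1 / 2 + ε) ≤ |Dn β ν h n (g n i)|}) ≤
        ENNReal.ofReal (((n : ℝ) + 1) * (2 * Real.exp (-((n : ℝ) ^ (2 * ε) / 2)))) := by
      intro n
      refine (measure_biUnion_finset_le _ _).trans ?_
      refine (Finset.sum_le_sum fun i _ => hoeffding_mu β ν μ hμ n (g n i) _ (by positivity)).trans ?_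
      rw [Finset.sum_const, Finset.card_range, nsmul_eq_mul,
        ENNReal.ofReal_mul (p := (n : ℝ) + 1) (by positivity)]
      have : ENNReal.ofReal ((n : ℝ) + 1) = ((n + 1 : ℕ) : ℝ≥0∞) := by
        rw [← ENNReal.ofReal_natCast]; push_cast; rfl
      rw [this]
      gcongr
      rcases Nat.eq_zero_or_pos n with rfl | hn
      · simp
        rw [Real.zero_rpow (by positivity)]; simp
      · have hn' : (0 : ℝ) < n := by exact_mod_cast hn
        rw [neg_div, neg_le_neg_iff, ← Real.rpow_natCast, ← Real.rpow_mul hn'.le]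
        have : (1 / 2 + ε) * ((2 : ℕ) : ℝ) = 1 + 2 * ε := by push_cast; ring
        rw [this, Real.rpow_add hn', Real.rpow_one]
        apply le_of_eq
        field_simp
    refine ne_top_of_le_ne_top ?_ (ENNReal.tsum_le_tsum hle)
    exact (summable_aux (2 * ε) (by positivity)).tsum_ofReal_ne_top

lemma Dn_lip (β : ℝ) (hβ : 0 < β) (ν : Measure ℝ) [IsProbabilityMeasure ν] (h : ℕ → ℝ) (n : ℕ)
    (x y : ℝ) : |Dn β ν h n x - Dn β ν h n y| ≤ n * (2 * β * |x - y|) := by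
  unfold Dn
  rw [← Finset.sum_sub_distrib]
  refine (Finset.abs_sum_le_sum_abs _ _).trans ?_
  have : ∀ i ∈ (Finset.univ : Finset (Fin n)), |Real.tanh (β * (x + h i)) - Ft β ν x -
      (Real.tanh (β * (y + h i)) - Ft β ν y)| ≤ 2 * β * |x - y| := by
    intro i _
    have h1 := tanh_lip (β * (x + h i)) (β * (y + h i))
    rw [← mul_sub, abs_mul, abs_of_pos hβ, add_sub_add_right_eq_sub] at h1
    have h2 := Ft_lip β hβ ν x y
    rw [abs_le] at *
    constructor <;> linarith [h1.1, h1.2, h2.1, h2.2]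
  refine (Finset.sum_le_sum this).trans ?_
  simp

lemma Dn_ae (β : ℝ) (hβ : 0 < β) (ν : Measure ℝ) [IsProbabilityMeasure ν] (μ : Measure (ℕ → ℝ))
    [IsProbabilityMeasure μ] (hμ : IsProductMeasure ν μ) (m : ℝ) :
    ∀ᵐ h ∂μ, ∀ R ε : ℝ, 0 < ε → ∀ᶠ n : ℕ in atTop, ∀ u : ℝ, |u| ≤ R →
      |Dn β ν h n (m + u)| ≤ (n : ℝ) ^ (1 / 2 + ε) := by
  have h1 : ∀ᵐ h ∂μ, ∀ N j : ℕ, ∀ᶠ n : ℕ in atTop, ∀ i ∈ Finset.range (n + 1),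
      |Dn β ν h n (m - (N + 1) + 2 * (N + 1) * i / n)| < (n : ℝ) ^ (1 / 2 + 1 / ((j : ℝ) + 1)) := by
    rw [ae_all_iff]; intro N
    rw [ae_all_iff]; intro j
    exact grid_ae β ν μ hμ (fun n i => m - (N + 1) + 2 * (N + 1) * i / n) _ (by positivity)
  filter_upwards [h1] with h hh R ε hε
  obtain ⟨N, hN⟩ := exists_nat_ge R
  obtain ⟨j, hj⟩ := exists_nat_one_div_lt hε
  set ε' := 1 / ((j : ℝ) + 1) with hε'
  have hε'0 : 0 < ε' := by positivity
  have t1 : Tendsto (fun n : ℕ => (n : ℝ) ^ (1 / 2 + ε')) atTop atTop :=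
    (tendsto_rpow_atTop (by positivity)).comp tendsto_natCast_atTop_atTop
  have t2 : Tendsto (fun n : ℕ => (n : ℝ) ^ (ε - ε')) atTop atTop :=
    (tendsto_rpow_atTop (by linarith)).comp tendsto_natCast_atTop_atTop
  filter_upwards [hh N j, t1.eventually_ge_atTop (4 * β * (N + 1)), t2.eventually_ge_atTop 2,
    eventually_ge_atTop 1] with n hn h2 h3 h4 u hu
  have hn0 : (0 : ℝ) < n := by exact_mod_cast h4
  have hM : (0 : ℝ) < (N : ℝ) + 1 := by positivity
  have hu' := abs_le.1 hu
  set z := (u + (N + 1)) * n / (2 * (N + 1)) with hz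
  have hz0 : 0 ≤ z := by
    apply div_nonneg (mul_nonneg (by linarith) hn0.le) (by positivity)
  have hzn : z ≤ n := by
    rw [hz, div_le_iff₀ (by positivity)]
    have : u + (N + 1) ≤ 2 * (N + 1) := by linarith
    nlinarith
  have hi : ⌊z⌋₊ ∈ Finset.range (n + 1) := by
    rw [Finset.mem_range, Nat.lt_succ_iff]
    exact Nat.floor_le_of_le hzn
  have h5 := hn _ hi
  set y := m - (N + 1) + 2 * (N + 1) * (⌊z⌋₊ : ℝ) / n with hy
  have h6 : |m + u - y| ≤ 2 * (N + 1) / n := by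
    have e : m + u - y = (z - ⌊z⌋₊) * (2 * (N + 1) / n) := by
      rw [hy, hz]; field_simp; ring
    rw [e, abs_mul, abs_of_nonneg (by positivity : (0:ℝ) ≤ 2 * (N + 1) / n)]
    apply mul_le_of_le_one_left (by positivity)
    rw [abs_le]
    constructor <;> linarith [Nat.floor_le hz0, Nat.lt_floor_add_one z]
  have h7 := Dn_lip β hβ ν h n (m + u) y
  have h8 : (n : ℝ) * (2 * β * |m + u - y|) ≤ 4 * β * (N + 1) := by
    calc (n : ℝ) * (2 * β * |m + u - y|) ≤ n * (2 * β * (2 * (N + 1) / n)) := by gcongr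
      _ = _ := by field_simp; ring
  have h9 : (n : ℝ) ^ (1 / 2 + ε) = (n : ℝ) ^ (1 / 2 + ε') * (n : ℝ) ^ (ε - ε') := by
    rw [← Real.rpow_add hn0]; congr 1; ring
  have h10 : |Dn β ν h n (m + u)| ≤ |Dn β ν h n y| + |Dn β ν h n (m + u) - Dn β ν h n y| := by
    have := abs_add_le (Dn β ν h n y) (Dn β ν h n (m + u) - Dn β ν h n y)
    simpa using this
  have h11 : 0 < (n : ℝ) ^ (1 / 2 + ε') := by positivity
  rw [h9]
  nlinarith
lemma tangent_pow_nonneg (N : ℕ) (hN : 1 ≤ N) (x y : ℝ) (hx : 0 ≤ x) (hy : 0 ≤ y) :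
    (N : ℝ) * x ^ (N - 1) * y ≤ y ^ N + ((N : ℝ) - 1) * x ^ N := by
  obtain ⟨M, rfl⟩ : ∃ M, N = M + 1 := ⟨N - 1, by omega⟩
  rcases hx.eq_or_lt with rfl | hx
  · rcases Nat.eq_zero_or_pos M with rfl | hM
    · simp
    · have : (0:ℝ) ^ M = 0 := zero_pow (by omega)
      simp [this]
      positivity
  · have h := one_add_mul_le_pow (a := y / x - 1) (by
      have : 0 ≤ y / x := by positivity
      linarith) (M + 1)
    have e : 1 + (y / x - 1) = y / x := by ring
    rw [e, div_pow, le_div_iff₀ (by positivity)] at h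
    have e2 : (1 + ((M + 1 : ℕ) : ℝ) * (y / x - 1)) * x ^ (M + 1)
        = ((M + 1 : ℕ) : ℝ) * x ^ M * y - (((M + 1 : ℕ) : ℝ) - 1) * x ^ (M + 1) := by
      field_simp; ring
    rw [e2] at h
    simp only [Nat.add_sub_cancel]
    linarith

lemma tangent_pow (k : ℕ) (hk : 1 ≤ k) (x y : ℝ) :
    2 * (k : ℝ) * x ^ (2 * k - 1) * y ≤ y ^ (2 * k) + (2 * (k : ℝ) - 1) * x ^ (2 * k) := by
  have h := tangent_pow_nonneg (2 * k) (by omega) |x| |y| (abs_nonneg _) (abs_nonneg _)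
  have he : Even (2 * k) := even_two_mul k
  rw [he.pow_abs, he.pow_abs] at h
  push_cast at h
  refine le_trans ?_ h
  refine le_trans (le_abs_self _) (le_of_eq ?_)
  rw [abs_mul, abs_mul, abs_pow, abs_of_nonneg (by positivity : (0:ℝ) ≤ 2 * k)]

lemma tangent_pow_strict (k : ℕ) (hk : 1 ≤ k) (x y : ℝ) (hxy : x ≠ y) :
    2 * (k : ℝ) * x ^ (2 * k - 1) * y < y ^ (2 * k) + (2 * (k : ℝ) - 1) * x ^ (2 * k) := by
  have h1 := tangent_pow k hk x ((x + y) / 2)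
  have hsc : StrictConvexOn ℝ Set.univ fun x : ℝ => x ^ (2 * k) :=
    Even.strictConvexOn_pow (even_two_mul k) (by omega)
  have h2 := hsc.2 (Set.mem_univ x) (Set.mem_univ y) hxy (show (0:ℝ) < 1 / 2 by norm_num)
    (show (0:ℝ) < 1 / 2 by norm_num) (by norm_num)
  simp only [smul_eq_mul] at h2
  have e : (1:ℝ) / 2 * x + 1 / 2 * y = (x + y) / 2 := by ring
  rw [e] at h2
  have e3 : x ^ (2 * k) = x ^ (2 * k - 1) * x := by
    rw [← pow_succ]; congr 1; omega
  have e4 : 2 * (k : ℝ) * x ^ (2 * k - 1) * ((x + y) / 2) =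
    k * x ^ (2 * k) + (2 * (k : ℝ) * x ^ (2 * k - 1) * y) / 2 := by rw [e3]; ring
  rw [e4] at h1
  linarith

lemma young_pert (k : ℕ) (hk : 1 ≤ k) (κ : ℝ) (hκ : 0 < κ) (x ε : ℝ) (hε : 0 < ε) :
    ∃ κ', 0 < κ' ∧ κ' < κ ∧ ∃ η > 0, ∀ s : ℝ,
      2 * k * κ * x ^ (2 * k - 1) * s + η * |s| - κ' * s ^ (2 * k)
        ≤ (2 * k - 1) * κ * x ^ (2 * k) + ε := by
  have he : Even (2 * k) := even_two_mul k
  have hk' : (1 : ℝ) ≤ k := by exact_mod_cast hk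
  have hcont : ContinuousAt (fun z : ℝ => (2 * k - 1) * κ * z ^ (2 * k)) |x| := by fun_prop
  have h1 : ∀ᶠ z in 𝓝 |x|, (2 * k - 1) * κ * z ^ (2 * k) < (2 * k - 1) * κ * x ^ (2 * k) + ε := by
    apply hcont.eventually (gt_mem_nhds _)
    simp only [he.pow_abs]; linarith
  have h2 : ∃ z, |x| < z ∧ (2 * k - 1) * κ * z ^ (2 * k) < (2 * k - 1) * κ * x ^ (2 * k) + ε := by
    have := (h1.filter_mono nhdsWithin_le_nhds : ∀ᶠ z in 𝓝[>] |x|, _).and self_mem_nhdsWithin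
    obtain ⟨z, hz1, hz2⟩ := this.exists
    exact ⟨z, hz2, hz1⟩
  obtain ⟨z, hxz, hz⟩ := h2
  have hz0 : 0 < z := (abs_nonneg x).trans_lt hxz
  have hpow : |x| ^ (2 * k - 1) < z ^ (2 * k - 1) :=
    pow_lt_pow_left₀ hxz (abs_nonneg x) (by omega)
  set r := |x| ^ (2 * k - 1) / z ^ (2 * k - 1) with hr
  have hr0 : 0 ≤ r := by positivity
  have hr1 : r < 1 := by rw [hr, div_lt_one (by positivity)]; exact hpow
  have hrz : r * z ^ (2 * k - 1) = |x| ^ (2 * k - 1) := by rw [hr]; field_simp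
  refine ⟨κ * (r + 1) / 2, by positivity, by nlinarith,
    2 * k * κ * ((1 - r) / 2 * z ^ (2 * k - 1)), ?_, fun s => ?_⟩
  · have : 0 < 1 - r := by linarith
    positivity
  · have t := tangent_pow_nonneg (2 * k) (by omega) z |s| hz0.le (abs_nonneg _)
    rw [he.pow_abs] at t
    push_cast at t
    have h3 : 2 * k * κ * x ^ (2 * k - 1) * s ≤ 2 * k * κ * |x| ^ (2 * k - 1) * |s| := by
      refine le_trans (le_abs_self _) (le_of_eq ?_)
      rw [abs_mul, abs_mul, abs_pow, abs_of_nonneg (by positivity : (0:ℝ) ≤ 2 * k * κ)]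
    rw [← hrz] at h3
    have h4 : (2 * k - 1) * (κ * (r + 1) / 2) * z ^ (2 * k) ≤ (2 * k - 1) * κ * z ^ (2 * k) := by
      have : 0 ≤ (2 * (k:ℝ) - 1) := by linarith
      have : κ * (r + 1) / 2 ≤ κ := by nlinarith
      gcongr
    have h5 := mul_le_mul_of_nonneg_left t (by positivity : 0 ≤ κ * (r + 1) / 2)
    nlinarith

lemma quad_lower (H : ℝ → ℝ) (hHc : Continuous H) (hHpos : ∀ u, u ≠ 0 → 0 < H u)
    (c0 B : ℝ) (hc0 : 0 < c0) (hgrow : ∀ u, c0 * u ^ 2 - B ≤ H u) (δ : ℝ) (hδ : 0 < δ) :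
    ∃ c > 0, ∀ u, δ ≤ |u| → c * u ^ 2 ≤ H u := by
  set R := max δ (Real.sqrt (2 * |B| / c0)) with hR
  have hS : IsCompact ({u : ℝ | δ ≤ |u|} ∩ Set.Icc (-R) R) :=
    isCompact_Icc.inter_left (isClosed_le continuous_const continuous_abs)
  have hne : ({u : ℝ | δ ≤ |u|} ∩ Set.Icc (-R) R).Nonempty := by
    have : δ ≤ R := le_max_left _ _
    exact ⟨δ, show δ ≤ |δ| from le_abs_self _, by linarith, this⟩
  have hcon : ContinuousOn (fun u => H u / u ^ 2) ({u : ℝ | δ ≤ |u|} ∩ Set.Icc (-R) R) := by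
    refine hHc.continuousOn.div (by fun_prop) ?_
    rintro u ⟨hu, _⟩
    have hu : δ ≤ |u| := hu
    have : u ≠ 0 := by
      rintro rfl; simp at hu; linarith
    positivity
  obtain ⟨u0, ⟨hu0, hu0'⟩, hmin⟩ := hS.exists_isMinOn hne hcon
  have hu0 : δ ≤ |u0| := hu0
  have hu00 : u0 ≠ 0 := by
    rintro rfl; simp at hu0; linarith
  refine ⟨min (H u0 / u0 ^ 2) (c0 / 2), ?_, fun u hu => ?_⟩
  · have := hHpos u0 hu00
    have : 0 < H u0 / u0 ^ 2 := by positivity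
    exact lt_min this (by positivity)
  · have hune : u ≠ 0 := by
      rintro rfl; simp at hu; linarith
    have hu2 : 0 < u ^ 2 := by positivity
    by_cases hle : |u| ≤ R
    · have := hmin (a := u) ⟨hu, abs_le.1 hle⟩
      have h2 : H u0 / u0 ^ 2 ≤ H u / u ^ 2 := this
      have h3 : H u = H u / u ^ 2 * u ^ 2 := by field_simp
      rw [h3]
      exact mul_le_mul_of_nonneg_right ((min_le_left _ _).trans h2) hu2.le
    · push Not at hle
      have h1 : Real.sqrt (2 * |B| / c0) ≤ |u| := (le_max_right _ _).trans hle.le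
      rw [Real.sqrt_le_left (abs_nonneg _), sq_abs, div_le_iff₀ hc0] at h1
      have h2 := hgrow u
      have h3 := le_abs_self B
      have h4 : min (H u0 / u0 ^ 2) (c0 / 2) * u ^ 2 ≤ c0 / 2 * u ^ 2 :=
        mul_le_mul_of_nonneg_right (min_le_right _ _) hu2.le
      nlinarith

/-- Scaling facts. -/
lemma scale_facts (k : ℕ) (α : ℝ) (n : ℕ) (hn : 1 ≤ n) :
    0 < (n : ℝ) ^ (α - 1) ∧ (n : ℝ) * (n : ℝ) ^ (α - 1) = (n : ℝ) ^ α ∧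
    (n : ℝ) * ((n : ℝ) ^ (α - 1)) ^ (2 * k) = (n : ℝ) ^ (1 - 2 * (k : ℝ) * (1 - α)) := by
  have hn' : (0 : ℝ) < n := by exact_mod_cast hn
  refine ⟨by positivity, ?_, ?_⟩
  · nth_rewrite 1 [← Real.rpow_one (n : ℝ)]
    rw [← Real.rpow_add hn']; congr 1; ring
  · nth_rewrite 1 [← Real.rpow_one (n : ℝ)]
    rw [← Real.rpow_natCast, ← Real.rpow_mul hn'.le, ← Real.rpow_add hn']
    congr 1; push_cast; ring

/-- Hypotheses of the Laplace argument. -/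
structure LapHyp (H : ℝ → ℝ) (Hn : ℕ → ℝ → ℝ) (k : ℕ) (κ c0 B b : ℝ) : Prop where
  hk : 1 ≤ k
  hκ : 0 < κ
  hc0 : 0 < c0
  hb0 : 0 ≤ b
  cont : Continuous H
  zero : H 0 = 0
  pos : ∀ u, u ≠ 0 → 0 < H u
  tay : Tendsto (fun u => H u / u ^ (2 * k)) (𝓝[≠] 0) (𝓝 κ)
  grow : ∀ u, c0 * u ^ 2 - B ≤ H u
  far : ∀ n u, |Hn n u - H u| ≤ b * |u|
  near : ∀ R ε : ℝ, 0 < ε → ∀ᶠ n : ℕ in atTop, ∀ u : ℝ, |u| ≤ R →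
      n * |Hn n u - H u| ≤ b * (n : ℝ) ^ (1 / 2 + ε) * |u|
  int : ∀ (n : ℕ) (t : ℝ), 1 ≤ n → Integrable (fun u => Real.exp (n * (t * u) - n * Hn n u))

/-- The Laplace integral. -/
def lapInt (Hn : ℕ → ℝ → ℝ) (n : ℕ) (t : ℝ) : ℝ := ∫ u, Real.exp (n * (t * u) - n * Hn n u)

lemma LapHyp.taylor_bounds {H : ℝ → ℝ} {Hn : ℕ → ℝ → ℝ} {k : ℕ} {κ c0 B b : ℝ}
    (L : LapHyp H Hn k κ c0 B b) (κ1 κ2 : ℝ) (h1 : κ1 < κ) (h2 : κ < κ2) :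
    ∃ δ > 0, ∀ u, |u| ≤ δ → κ1 * u ^ (2 * k) ≤ H u ∧ H u ≤ κ2 * u ^ (2 * k) := by
  have hev := L.tay.eventually (Ioo_mem_nhds h1 h2)
  rw [eventually_nhdsWithin_iff, Metric.eventually_nhds_iff] at hev
  obtain ⟨δ, hδ, hh⟩ := hev
  refine ⟨δ / 2, by positivity, fun u hu => ?_⟩
  by_cases hu0 : u = 0
  · subst hu0
    have : (0:ℝ) ^ (2 * k) = 0 := zero_pow (by have := L.hk; omega)
    simp [L.zero, this]
  · have h := hh (y := u) (by simp; linarith) hu0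
    have hp : 0 < u ^ (2 * k) := (even_two_mul k).pow_pos hu0
    have ha := h.1
    have hb := h.2
    rw [lt_div_iff₀ hp] at ha
    rw [div_lt_iff₀ hp] at hb
    exact ⟨ha.le, hb.le⟩

/-- The deviation is negligible. -/
lemma LapHyp.dev {H : ℝ → ℝ} {Hn : ℕ → ℝ → ℝ} {k : ℕ} {κ c0 B b : ℝ}
    (L : LapHyp H Hn k κ c0 B b) (α : ℝ) (hα : 1 - 1 / (2 * (2 * (k : ℝ) - 1)) < α)
    (R η : ℝ) (hη : 0 < η) :
    ∀ᶠ n : ℕ in atTop, ∀ u : ℝ, |u| ≤ R → n * |Hn n u - H u| ≤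
      (n : ℝ) ^ (1 - 2 * (k : ℝ) * (1 - α)) * (η * (|u| / (n : ℝ) ^ (α - 1))) := by
  have hk : (1 : ℝ) ≤ k := by exact_mod_cast L.hk
  set γ := 1 - 2 * (k : ℝ) * (1 - α) with hγ
  have hgap : α - 1 / 2 < γ := by
    have h2k : 0 < 2 * (k : ℝ) - 1 := by linarith
    have : 1 - α < 1 / (2 * (2 * (k : ℝ) - 1)) := by linarith
    rw [lt_div_iff₀ (by positivity)] at this
    rw [hγ]; nlinarith
  set ε := (γ - (α - 1 / 2)) / 2 with hε
  have hε0 : 0 < ε := by rw [hε]; linarith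
  have t0 : Tendsto (fun n : ℕ => b * (n : ℝ) ^ (-ε)) atTop (𝓝 (b * 0)) :=
    ((tendsto_rpow_neg_atTop hε0).comp tendsto_natCast_atTop_atTop).const_mul b
  rw [mul_zero] at t0
  filter_upwards [L.near R ε hε0, t0.eventually (gt_mem_nhds hη), eventually_ge_atTop 1]
    with n h1 h2 hn u hu
  have hn' : (0 : ℝ) < n := by exact_mod_cast hn
  refine (h1 u hu).trans ?_
  have e1 : (n : ℝ) ^ (1 / 2 + ε) = (n : ℝ) ^ (-ε) * ((n : ℝ) ^ γ / (n : ℝ) ^ (α - 1)) := by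
    rw [← Real.rpow_sub hn', ← Real.rpow_add hn']; congr 1; rw [hε]; ring
  rw [e1]
  have hp : 0 < (n : ℝ) ^ γ / (n : ℝ) ^ (α - 1) := by positivity
  calc b * ((n : ℝ) ^ (-ε) * ((n : ℝ) ^ γ / (n : ℝ) ^ (α - 1))) * |u|
      = (b * (n : ℝ) ^ (-ε)) * (((n : ℝ) ^ γ / (n : ℝ) ^ (α - 1)) * |u|) := by ring
    _ ≤ η * (((n : ℝ) ^ γ / (n : ℝ) ^ (α - 1)) * |u|) := by gcongr
    _ = _ := by ring
lemma expo_id (n : ℕ) (hn : 1 ≤ n) (k : ℕ) (α θ u : ℝ) :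
    (n : ℝ) * (θ * (n : ℝ) ^ (1 - 2 * (k : ℝ) * (1 - α)) / (n : ℝ) ^ α * u) =
      (n : ℝ) ^ (1 - 2 * (k : ℝ) * (1 - α)) * (θ * (u / (n : ℝ) ^ (α - 1))) := by
  obtain ⟨hw, h1, h2⟩ := scale_facts k α n hn
  have hn' : (0 : ℝ) < n := by exact_mod_cast hn
  rw [← h1]
  field_simp

lemma pow_id (n : ℕ) (hn : 1 ≤ n) (k : ℕ) (α c u : ℝ) :
    (n : ℝ) * (c * u ^ (2 * k)) =
      (n : ℝ) ^ (1 - 2 * (k : ℝ) * (1 - α)) * (c * (u / (n : ℝ) ^ (α - 1)) ^ (2 * k)) := by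
  obtain ⟨hw, h1, h2⟩ := scale_facts k α n hn
  rw [← h2, div_pow]
  field_simp

lemma gamma_pos (k : ℕ) (hk : 1 ≤ k) (α : ℝ) (hα : 1 - 1 / (2 * (2 * (k : ℝ) - 1)) < α) :
    0 < 1 - 2 * (k : ℝ) * (1 - α) := by
  have hk : (1 : ℝ) ≤ k := by exact_mod_cast hk
  have h2k : 0 < 2 * (k : ℝ) - 1 := by linarith
  have : 1 - α < 1 / (2 * (2 * (k : ℝ) - 1)) := by linarith
  rw [lt_div_iff₀ (by positivity)] at this
  by_cases h : 1 - α ≤ 0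
  · nlinarith
  · nlinarith

set_option maxHeartbeats 2000000 in
lemma LapHyp.upper {H : ℝ → ℝ} {Hn : ℕ → ℝ → ℝ} {k : ℕ} {κ c0 B b : ℝ}
    (L : LapHyp H Hn k κ c0 B b) (α : ℝ) (hα : 1 - 1 / (2 * (2 * (k : ℝ) - 1)) < α)
    (hα1 : α < 1) (x ε : ℝ) (hε : 0 < ε) :
    ∃ C > 0, ∀ᶠ n : ℕ in atTop,
      lapInt Hn n (2 * k * κ * x ^ (2 * k - 1) * (n : ℝ) ^ (1 - 2 * (k : ℝ) * (1 - α)) / (n : ℝ) ^ α)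
        ≤ C * Real.exp ((n : ℝ) ^ (1 - 2 * (k : ℝ) * (1 - α)) *
            ((2 * k - 1) * κ * x ^ (2 * k) + ε)) := by
  have hk : (1 : ℝ) ≤ k := by exact_mod_cast L.hk
  obtain ⟨κ', hκ'0, hκ', η, hη, hyoung⟩ := young_pert k L.hk κ L.hκ x ε hε
  obtain ⟨δ, hδ, htay⟩ := L.taylor_bounds κ' (κ + 1) hκ' (by linarith)
  obtain ⟨c, hc, hquad⟩ := quad_lower H L.cont L.pos c0 B L.hc0 L.grow δ hδ
  set γ := 1 - 2 * (k : ℝ) * (1 - α) with hγ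
  set θ := 2 * k * κ * x ^ (2 * k - 1) with hθ
  have hγα : γ < α := by rw [hγ]; nlinarith
  -- smallness of the perturbations in the far region
  have hR : ∀ᶠ n : ℕ in atTop, ∀ u : ℝ, |u| ≤ max δ (2 * b / c) →
      |Hn n u - H u| ≤ (c * δ / 4) * |u| := by
    have t0 : Tendsto (fun n : ℕ => b * (n : ℝ) ^ (-(1 / 4 : ℝ))) atTop (𝓝 (b * 0)) :=
      ((tendsto_rpow_neg_atTop (by norm_num)).comp tendsto_natCast_atTop_atTop).const_mul b
    rw [mul_zero] at t0
    filter_upwards [L.near (max δ (2 * b / c)) (1 / 4) (by norm_num),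
      t0.eventually (gt_mem_nhds (show 0 < c * δ / 4 by positivity)), eventually_ge_atTop 1]
      with n h1 h2 hn u hu
    have hn' : (0 : ℝ) < n := by exact_mod_cast hn
    have h3 := h1 u hu
    have e : (n : ℝ) ^ ((1 : ℝ) / 2 + 1 / 4) = n * (n : ℝ) ^ (-(1 / 4 : ℝ)) := by
      nth_rewrite 2 [← Real.rpow_one (n : ℝ)]
      rw [← Real.rpow_add hn']; norm_num
    rw [e] at h3
    have h4 : (n : ℝ) * |Hn n u - H u| ≤ n * ((b * (n : ℝ) ^ (-(1 / 4 : ℝ))) * |u|) := by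
      refine h3.trans (le_of_eq (by ring))
    have h5 := le_of_mul_le_mul_left h4 hn'
    refine h5.trans ?_
    gcongr
  have ht : ∀ᶠ n : ℕ in atTop, |θ * (n : ℝ) ^ γ / (n : ℝ) ^ α| < c * δ / 8 := by
    have t0 : Tendsto (fun n : ℕ => |θ * (n : ℝ) ^ (-(α - γ))|) atTop (𝓝 |θ * 0|) :=
      (((tendsto_rpow_neg_atTop (by linarith)).comp tendsto_natCast_atTop_atTop).const_mul θ).abs
    rw [mul_zero, abs_zero] at t0
    filter_upwards [t0.eventually (gt_mem_nhds (show 0 < c * δ / 8 by positivity)),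
      eventually_ge_atTop 1] with n h2 hn
    have hn' : (0 : ℝ) < n := by exact_mod_cast hn
    have e : -(α - γ) = γ - α := by ring
    rw [e, Real.rpow_sub hn', ← mul_div_assoc] at h2
    exact h2
  refine ⟨2 * δ + Real.sqrt (π / (c / 8)), by positivity, ?_⟩
  filter_upwards [hR, ht, L.dev α hα δ η hη, eventually_ge_atTop 1] with n h1 h2 h3 hn
  have hn' : (1 : ℝ) ≤ n := by exact_mod_cast hn
  have hn0 : (0 : ℝ) < n := by linarith
  set t := θ * (n : ℝ) ^ γ / (n : ℝ) ^ α with ht_def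
  set a := (n : ℝ) ^ γ with ha
  have ha0 : 0 < a := by positivity
  set E := Real.exp (a * ((2 * k - 1) * κ * x ^ (2 * k) + ε)) with hE
  have hL0 : 0 ≤ (2 * k - 1) * κ * x ^ (2 * k) + ε := by
    have h1 : 0 ≤ 2 * (k : ℝ) - 1 := by linarith
    have h2 := L.hκ
    have h3 : 0 ≤ x ^ (2 * k) := (even_two_mul k).pow_nonneg x
    positivity
  have hE1 : 1 ≤ E := Real.one_le_exp (by positivity)
  have hpt : ∀ u, Real.exp (n * (t * u) - n * Hn n u) ≤
      (Set.Icc (-δ) δ).indicator (fun _ => E) u + E * Real.exp (-(c / 8) * u ^ 2) := by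
    intro u
    by_cases hu : |u| ≤ δ
    · rw [Set.indicator_of_mem (show u ∈ Set.Icc (-δ) δ from abs_le.1 hu)]
      have : Real.exp (n * (t * u) - n * Hn n u) ≤ E := by
        rw [hE, Real.exp_le_exp]
        have e1 := expo_id n hn k α θ u
        rw [← hγ, ← ha, ← ht_def] at e1
        have e2 := pow_id n hn k α κ' u
        rw [← hγ, ← ha] at e2
        have e3 := h3 u hu
        have e4 := (htay u hu).1
        have e5 := hyoung (u / (n : ℝ) ^ (α - 1))
        have e6 : |u / (n : ℝ) ^ (α - 1)| = |u| / (n : ℝ) ^ (α - 1) := by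
          rw [abs_div, abs_of_pos (scale_facts k α n hn).1]
        rw [e6] at e5
        have e7 := neg_abs_le (Hn n u - H u)
        have e8 : (n : ℝ) * (κ' * u ^ (2 * k)) ≤ n * H u := by gcongr
        have e9 : (n : ℝ) * (H u - Hn n u) ≤ n * |Hn n u - H u| :=
          mul_le_mul_of_nonneg_left (by linarith) hn0.le
        have e10 := mul_le_mul_of_nonneg_left e5 ha0.le
        rw [e1]
        nlinarith
      have h0 : 0 ≤ E * Real.exp (-(c / 8) * u ^ 2) := by positivity
      linarith
    · push Not at hu
      rw [Set.indicator_of_notMem (by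
        rw [Set.mem_Icc, ← abs_le]; exact not_le.2 hu), zero_add]
      have hq := hquad u hu.le
      have habs : |Hn n u - H u| ≤ c / 2 * u ^ 2 := by
        by_cases hu2 : |u| ≤ max δ (2 * b / c)
        · refine (h1 u hu2).trans ?_
          rw [← sq_abs u]
          have : 0 < c * |u| := mul_pos hc (hδ.trans hu)
          nlinarith
        · push Not at hu2
          refine (L.far n u).trans ?_
          have : 2 * b / c < |u| := (le_max_right _ _).trans_lt hu2
          rw [div_lt_iff₀ hc] at this
          rw [← sq_abs u]
          nlinarith [abs_nonneg u]
      have htu : t * u ≤ c / 8 * u ^ 2 := by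
        refine (le_abs_self _).trans ?_
        rw [abs_mul, ← sq_abs u]
        have : 0 < c * |u| := mul_pos hc (hδ.trans hu)
        nlinarith [abs_nonneg u]
      have e7 := neg_abs_le (Hn n u - H u)
      have : n * (t * u) - n * Hn n u ≤ -(c / 8) * u ^ 2 := by
        have h9 : t * u - Hn n u ≤ -(c / 8) * u ^ 2 := by nlinarith [sq_nonneg u]
        have h10 : -(c / 8) * u ^ 2 ≤ 0 := by nlinarith [sq_nonneg u]
        have h11 : n * (t * u) - n * Hn n u = n * (t * u - Hn n u) := by ring
        rw [h11]
        nlinarith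
      calc Real.exp (n * (t * u) - n * Hn n u) ≤ 1 * Real.exp (-(c / 8) * u ^ 2) := by
            rw [one_mul, Real.exp_le_exp]; exact this
        _ ≤ _ := by gcongr
  have hi1 : Integrable ((Set.Icc (-δ) δ).indicator (fun _ : ℝ => E)) :=
    (integrable_indicator_iff measurableSet_Icc).2 (integrableOn_const (by simp) (by simp))
  have hi2 : Integrable (fun u : ℝ => E * Real.exp (-(c / 8) * u ^ 2)) :=
    (integrable_exp_neg_mul_sq (by positivity)).const_mul E
  unfold lapInt
  refine (integral_mono (L.int n t hn) (hi1.add hi2) hpt).trans ?_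
  simp only [Pi.add_apply]
  rw [integral_add hi1 hi2, integral_indicator measurableSet_Icc, integral_const_mul,
    integral_gaussian]
  simp only [integral_const, measureReal_restrict_apply_univ, Real.volume_real_Icc, smul_eq_mul]
  rw [max_eq_left (by linarith)]
  apply le_of_eq; ring

lemma LapHyp.lower {H : ℝ → ℝ} {Hn : ℕ → ℝ → ℝ} {k : ℕ} {κ c0 B b : ℝ}
    (L : LapHyp H Hn k κ c0 B b) (α : ℝ) (hα : 1 - 1 / (2 * (2 * (k : ℝ) - 1)) < α)
    (hα1 : α < 1) (x ε : ℝ) (hε : 0 < ε) :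
    ∃ ρ > 0, ∀ᶠ n : ℕ in atTop,
      ρ * (n : ℝ) ^ (α - 1) * Real.exp ((n : ℝ) ^ (1 - 2 * (k : ℝ) * (1 - α)) *
            ((2 * k - 1) * κ * x ^ (2 * k) - ε)) ≤
      lapInt Hn n (2 * k * κ * x ^ (2 * k - 1) * (n : ℝ) ^ (1 - 2 * (k : ℝ) * (1 - α)) / (n : ℝ) ^ α)
        := by
  set γ := 1 - 2 * (k : ℝ) * (1 - α) with hγ
  set θ := 2 * k * κ * x ^ (2 * k - 1) with hθ
  have e3 : x ^ (2 * k) = x ^ (2 * k - 1) * x := by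
    rw [← pow_succ]; congr 1; have := L.hk; omega
  have hcont : Continuous (fun p : ℝ × ℝ => θ * p.1 - (κ + p.2) * p.1 ^ (2 * k) - p.2 * |p.1|) := by
    fun_prop
  have hev : ∀ᶠ p : ℝ × ℝ in 𝓝 (x, 0), (2 * k - 1) * κ * x ^ (2 * k) - ε <
      θ * p.1 - (κ + p.2) * p.1 ^ (2 * k) - p.2 * |p.1| := by
    apply hcont.continuousAt.eventually (lt_mem_nhds _)
    simp only [add_zero, zero_mul, sub_zero]
    rw [hθ, e3]; nlinarith
  rw [Metric.eventually_nhds_iff] at hev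
  obtain ⟨ρ0, hρ0, hev⟩ := hev
  set ρ := ρ0 / 2 with hρ
  have hρp : 0 < ρ := by positivity
  have hΦ : ∀ s, s ∈ Set.Icc x (x + ρ) → (2 * k - 1) * κ * x ^ (2 * k) - ε ≤
      θ * s - (κ + ρ) * s ^ (2 * k) - ρ * |s| := by
    intro s hs
    refine (hev (y := (s, ρ)) ?_).le
    rw [Prod.dist_eq, max_lt_iff, Real.dist_eq, Real.dist_eq]
    simp only [sub_zero]
    rw [abs_of_pos hρp, abs_of_nonneg (by linarith [hs.1])]
    constructor <;> linarith [hs.2]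
  obtain ⟨δ, hδ, htay⟩ := L.taylor_bounds (κ - 1) (κ + ρ) (by linarith) (by linarith)
  refine ⟨ρ, hρp, ?_⟩
  have hw : ∀ᶠ n : ℕ in atTop, (|x| + ρ) * (n : ℝ) ^ (α - 1) < δ := by
    have t0 : Tendsto (fun n : ℕ => (|x| + ρ) * (n : ℝ) ^ (-(1 - α))) atTop (𝓝 ((|x| + ρ) * 0)) :=
      ((tendsto_rpow_neg_atTop (by linarith)).comp tendsto_natCast_atTop_atTop).const_mul _
    rw [mul_zero] at t0
    filter_upwards [t0.eventually (gt_mem_nhds hδ)] with n hn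
    have : α - 1 = -(1 - α) := by ring
    rwa [this]
  filter_upwards [hw, L.dev α hα δ ρ hρp, eventually_ge_atTop 1] with n h1 h3 hn
  have hn' : (1 : ℝ) ≤ n := by exact_mod_cast hn
  have hn0 : (0 : ℝ) < n := by linarith
  have hw0 := (scale_facts k α n hn).1
  set t := θ * (n : ℝ) ^ γ / (n : ℝ) ^ α with ht_def
  set a := (n : ℝ) ^ γ with ha
  have ha0 : 0 < a := by positivity
  set w := (n : ℝ) ^ (α - 1) with hwd
  set E := Real.exp (a * ((2 * k - 1) * κ * x ^ (2 * k) - ε)) with hE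
  have hpt : ∀ u, (Set.Icc (x * w) ((x + ρ) * w)).indicator (fun _ => E) u ≤
      Real.exp (n * (t * u) - n * Hn n u) := by
    intro u
    by_cases hu : u ∈ Set.Icc (x * w) ((x + ρ) * w)
    · rw [Set.indicator_of_mem hu, hE, Real.exp_le_exp]
      have hs : u / w ∈ Set.Icc x (x + ρ) := by
        constructor
        · rw [le_div_iff₀ hw0]; exact hu.1
        · rw [div_le_iff₀ hw0]; exact hu.2
      have hsabs : |u / w| ≤ |x| + ρ := by
        rw [abs_le]
        constructor <;> linarith [hs.1, hs.2, neg_abs_le x, le_abs_self x]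
      have e6 : |u / w| = |u| / w := by
        rw [abs_div, abs_of_pos hw0]
      have huδ : |u| ≤ δ := by
        rw [e6, div_le_iff₀ hw0] at hsabs
        linarith
      have e1 := expo_id n hn k α θ u
      rw [← hγ, ← ha, ← ht_def] at e1
      have e2 := pow_id n hn k α (κ + ρ) u
      rw [← hγ, ← ha] at e2
      have e3 := h3 u huδ
      have e4 := (htay u huδ).2
      have e5 := hΦ (u / w) hs
      rw [e6] at e5
      have e7 := le_abs_self (Hn n u - H u)
      have e8 : n * H u ≤ (n : ℝ) * ((κ + ρ) * u ^ (2 * k)) := by gcongr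
      have e9 : (n : ℝ) * (Hn n u - H u) ≤ n * |Hn n u - H u| :=
        mul_le_mul_of_nonneg_left (by linarith) hn0.le
      have e10 := mul_le_mul_of_nonneg_left e5 ha0.le
      rw [e1]
      nlinarith
    · rw [Set.indicator_of_notMem hu]; positivity
  have hi1 : Integrable ((Set.Icc (x * w) ((x + ρ) * w)).indicator (fun _ : ℝ => E)) :=
    (integrable_indicator_iff measurableSet_Icc).2 (integrableOn_const (by simp) (by simp))
  unfold lapInt
  refine le_trans ?_ (integral_mono hi1 (L.int n t hn) hpt)
  rw [integral_indicator measurableSet_Icc]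
  simp only [integral_const, measureReal_restrict_apply_univ, Real.volume_real_Icc, smul_eq_mul]
  rw [max_eq_left (by nlinarith)]
  apply le_of_eq; ring

lemma LapHyp.tendsto {H : ℝ → ℝ} {Hn : ℕ → ℝ → ℝ} {k : ℕ} {κ c0 B b : ℝ}
    (L : LapHyp H Hn k κ c0 B b) (α : ℝ) (hα : 1 - 1 / (2 * (2 * (k : ℝ) - 1)) < α)
    (hα1 : α < 1) (x : ℝ) :
    Tendsto (fun n : ℕ => ((n : ℝ) ^ (1 - 2 * (k : ℝ) * (1 - α)))⁻¹ * Real.log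
      (lapInt Hn n (2 * k * κ * x ^ (2 * k - 1) * (n : ℝ) ^ (1 - 2 * (k : ℝ) * (1 - α)) / (n : ℝ) ^ α)))
      atTop (𝓝 ((2 * k - 1) * κ * x ^ (2 * k))) := by
  have hγ0 := gamma_pos k L.hk α hα
  set γ := 1 - 2 * (k : ℝ) * (1 - α) with hγ
  set Λ := (2 * k - 1) * κ * x ^ (2 * k) with hΛ
  have ta : Tendsto (fun n : ℕ => (n : ℝ) ^ γ) atTop atTop :=
    (tendsto_rpow_atTop hγ0).comp tendsto_natCast_atTop_atTop
  have tlog : Tendsto (fun n : ℕ => Real.log n / (n : ℝ) ^ γ) atTop (𝓝 0) :=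
    ((isLittleO_log_rpow_atTop hγ0).tendsto_div_nhds_zero).comp tendsto_natCast_atTop_atTop
  rw [Metric.tendsto_nhds]
  intro ε hε
  obtain ⟨C, hC, hup⟩ := L.upper α hα hα1 x (ε / 2) (by positivity)
  obtain ⟨ρ, hρ, hlo⟩ := L.lower α hα hα1 x (ε / 2) (by positivity)
  have t1 : Tendsto (fun n : ℕ => Real.log C / (n : ℝ) ^ γ) atTop (𝓝 0) :=
    ta.const_div_atTop _
  have t2 : Tendsto (fun n : ℕ => Real.log ρ / (n : ℝ) ^ γ + (α - 1) * (Real.log n / (n : ℝ) ^ γ))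
      atTop (𝓝 (0 + (α - 1) * 0)) :=
    (ta.const_div_atTop _).add (tlog.const_mul _)
  rw [mul_zero, add_zero] at t2
  filter_upwards [hup, hlo, t1.eventually (gt_mem_nhds (half_pos hε)),
    t2.eventually (lt_mem_nhds (show -(ε / 2) < 0 by linarith)), eventually_ge_atTop 1]
    with n h1 h2 h3 h4 hn
  have hn0 : (0 : ℝ) < n := by exact_mod_cast hn
  rw [← hγ, ← hΛ] at h1 h2
  set a := (n : ℝ) ^ γ with ha
  have ha0 : 0 < a := by positivity
  set J := lapInt Hn n (2 * k * κ * x ^ (2 * k - 1) * a / (n : ℝ) ^ α) with hJ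
  have hlow0 : 0 < ρ * (n : ℝ) ^ (α - 1) * Real.exp (a * (Λ - ε / 2)) := by positivity
  have hJ0 : 0 < J := hlow0.trans_le h2
  have l1 := Real.log_le_log hJ0 h1
  have l2 := Real.log_le_log hlow0 h2
  rw [Real.log_mul (by positivity) (by positivity), Real.log_exp] at l1
  rw [Real.log_mul (by positivity) (by positivity), Real.log_mul (by positivity) (by positivity),
    Real.log_exp, Real.log_rpow hn0] at l2
  rw [Real.dist_eq, abs_lt]
  have e1 : a⁻¹ * Real.log J ≤ Real.log C / a + (Λ + ε / 2) := by
    have := mul_le_mul_of_nonneg_left l1 (inv_pos.2 ha0).le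
    refine this.trans (le_of_eq ?_)
    field_simp
  have e2 : Real.log ρ / a + (α - 1) * (Real.log n / a) + (Λ - ε / 2) ≤ a⁻¹ * Real.log J := by
    have := mul_le_mul_of_nonneg_left l2 (inv_pos.2 ha0).le
    refine le_trans (le_of_eq ?_) this
    field_simp
  constructor <;> linarith
/-! ### Hubbard-Stratonovich transform -/

lemma gauss_eq (A b y : ℝ) (hb : 0 < b) :
    Real.exp (A * y - b * y ^ 2) =
      Real.exp (A ^ 2 / (4 * b)) * Real.exp (-b * (y - A / (2 * b)) ^ 2) := by
  rw [← Real.exp_add]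
  congr 1
  field_simp
  ring

lemma gauss_integrable (A b : ℝ) (hb : 0 < b) :
    Integrable (fun y : ℝ => Real.exp (A * y - b * y ^ 2)) := by
  simp_rw [gauss_eq A b _ hb]
  exact ((integrable_exp_neg_mul_sq hb).comp_sub_right (A / (2 * b))).const_mul _

lemma gauss_integral (A b : ℝ) (hb : 0 < b) :
    ∫ y : ℝ, Real.exp (A * y - b * y ^ 2) = Real.exp (A ^ 2 / (4 * b)) * √(π / b) := by
  simp_rw [gauss_eq A b _ hb]
  rw [integral_const_mul, integral_sub_right_eq_self (fun y => Real.exp (-b * y ^ 2)),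
    integral_gaussian]

lemma prod_cosh (β : ℝ) (h : ℕ → ℝ) (n : ℕ) (y : ℝ) :
    2 ^ n * ∏ i : Fin n, Real.cosh (β * (y + h i)) =
      ∑ σ : Fin n → Bool, Real.exp (β * y * mag σ + β * ∑ i : Fin n, h i * spin (σ i)) := by
  have h1 : ∀ i : Fin n, 2 * Real.cosh (β * (y + h i)) =
      ∑ b : Bool, Real.exp (β * (y + h i) * spin b) := by
    intro i
    rw [Real.cosh_eq]
    simp [spin]
    ring
  have h2 : (2 : ℝ) ^ n = ∏ _i : Fin n, (2 : ℝ) := by simp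
  rw [h2, ← Finset.prod_mul_distrib, Finset.prod_congr rfl (fun i _ => h1 i),
    Finset.prod_univ_sum, Fintype.piFinset_univ]
  refine Finset.sum_congr rfl fun σ _ => ?_
  rw [← Real.exp_sum]
  congr 1
  rw [mag, Finset.mul_sum, Finset.mul_sum, ← Finset.sum_add_distrib]
  exact Finset.sum_congr rfl fun i _ => by ring

/-- Centered finite-volume function. -/
def HnF (β : ℝ) (h : ℕ → ℝ) (m : ℝ) (n : ℕ) (u : ℝ) : ℝ := Gn β h n (m + u) - Gn β h n m

lemma exp_HnF (β : ℝ) (h : ℕ → ℝ) (m : ℝ) (n : ℕ) (hn : 1 ≤ n) (t u : ℝ) :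
    Real.exp (n * (t * u) - n * HnF β h m n u) =
      Real.exp (n * Gn β h n m - n * (t * m)) * (2 ^ n)⁻¹ *
        ∑ σ : Fin n → Bool, Real.exp (β * ∑ i : Fin n, h i * spin (σ i)) *
          Real.exp ((n * t + β * mag σ) * (u + m) - (n * β / 2) * (u + m) ^ 2) := by
  have hn0 : (n : ℝ) ≠ 0 := by
    have : (0 : ℝ) < n := by exact_mod_cast hn
    exact this.ne'
  have e1 : n * (t * u) - n * HnF β h m n u = (n * Gn β h n m - n * (t * m)) +
      ((n * t * (u + m) - n * β / 2 * (u + m) ^ 2) +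
        ∑ i : Fin n, Real.log (Real.cosh (β * ((u + m) + h i)))) := by
    rw [HnF, add_comm m u]
    nth_rw 1 [Gn]
    field_simp
    ring
  rw [e1, Real.exp_add, mul_assoc (Real.exp _)]
  congr 1
  rw [Real.exp_add, Real.exp_sum]
  simp_rw [Real.exp_log (Real.cosh_pos _)]
  have e2 := prod_cosh β h n (u + m)
  have e3 : ∏ i : Fin n, Real.cosh (β * ((u + m) + h i)) = (2 ^ n)⁻¹ *
      ∑ σ : Fin n → Bool, Real.exp (β * (u + m) * mag σ + β * ∑ i : Fin n, h i * spin (σ i)) := by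
    rw [← e2]; field_simp
  rw [e3, mul_left_comm, Finset.mul_sum]
  congr 1
  refine Finset.sum_congr rfl fun σ _ => ?_
  rw [← Real.exp_add, ← Real.exp_add]
  congr 1
  ring

lemma HnF_integrable (β : ℝ) (hβ : 0 < β) (h : ℕ → ℝ) (m : ℝ) (n : ℕ) (hn : 1 ≤ n) (t : ℝ) :
    Integrable (fun u => Real.exp (n * (t * u) - n * HnF β h m n u)) := by
  have hn0 : (0 : ℝ) < n := by exact_mod_cast hn
  simp_rw [exp_HnF β h m n hn t]
  refine Integrable.const_mul (integrable_finsetSum _ fun σ _ => Integrable.const_mul ?_ _) _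
  exact (gauss_integrable (n * t + β * mag σ) (n * β / 2) (by positivity)).comp_add_right m

lemma hubbard (β : ℝ) (hβ : 0 < β) (h : ℕ → ℝ) (m : ℝ) (n : ℕ) (hn : 1 ≤ n) :
    ∃ c : ℝ, 0 < c ∧ ∀ t : ℝ,
      ∑ σ : Fin n → Bool, gibbsWeight β h n σ * Real.exp (t * (mag σ - n * m)) =
        c * Real.exp (-(n * t ^ 2 / (2 * β))) * lapInt (HnF β h m) n t := by
  have hn0 : (0 : ℝ) < n := by exact_mod_cast hn
  have hb : 0 < n * β / 2 := by positivity
  refine ⟨(Real.exp (n * Gn β h n m) * (2 ^ n)⁻¹ * √(π / (n * β / 2)))⁻¹, by positivity,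
    fun t => ?_⟩
  have key : lapInt (HnF β h m) n t =
      Real.exp (n * Gn β h n m - n * (t * m)) * (2 ^ n)⁻¹ *
        ∑ σ : Fin n → Bool, Real.exp (β * ∑ i : Fin n, h i * spin (σ i)) *
          (Real.exp ((n * t + β * mag σ) ^ 2 / (4 * (n * β / 2))) * √(π / (n * β / 2))) := by
    unfold lapInt
    simp_rw [exp_HnF β h m n hn t]
    rw [integral_const_mul, integral_finsetSum]
    · congr 1
      refine Finset.sum_congr rfl fun σ _ => ?_
      rw [integral_const_mul, integral_add_right_eq_self
        (fun y => Real.exp ((n * t + β * mag σ) * y - (n * β / 2) * y ^ 2)),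
        gauss_integral _ _ hb]
    · intro σ _
      exact ((gauss_integrable (n * t + β * mag σ) (n * β / 2) hb).comp_add_right m).const_mul _
  have hs : √(π / (n * β / 2)) ≠ 0 := by positivity
  have h2 : (2 : ℝ) ^ n ≠ 0 := by positivity
  rw [key, Real.exp_sub]
  set s := √(π / (n * β / 2)) with hs_def
  rw [show ∀ c E X D P S : ℝ, c * E * (X / D * P * S) = (c * X * P) * (E / D * S) by
    intros; ring, Finset.mul_sum, Finset.mul_sum]
  refine Finset.sum_congr rfl fun σ _ => ?_
  have : Real.exp (n * Gn β h n m) ≠ 0 := (Real.exp_pos _).ne'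
  rw [show ∀ A B C D E F G : ℝ, (A * B * C)⁻¹ * A * B * (D / E * (F * (G * C))) =
     (A⁻¹ * A * (B⁻¹ * B) * (C⁻¹ * C)) * (D / E * F * G) by intros; rw [mul_inv, mul_inv]; ring,
    inv_mul_cancel₀ this, inv_mul_cancel₀ (inv_ne_zero h2), inv_mul_cancel₀ hs]
  rw [one_mul, one_mul, one_mul, ← Real.exp_sub, ← Real.exp_add, ← Real.exp_add, gibbsWeight,
    ← Real.exp_add]
  congr 1
  field_simp
  ring
/-! ### Verification of the Laplace hypotheses -/

lemma mvt_bound (f f' : ℝ → ℝ) (C u : ℝ) (hf : ∀ v, HasDerivAt f (f' v) v) (h0 : f 0 = 0)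
    (hb : ∀ v, |v| ≤ |u| → |f' v| ≤ C) : |f u| ≤ C * |u| := by
  have := Convex.norm_image_sub_le_of_norm_hasDerivWithin_le (f := f) (f' := f') (C := C)
    (s := Set.Icc (-|u|) |u|) (x := 0) (y := u)
    (fun x _ => (hf x).hasDerivWithinAt) (fun x hx => hb x (abs_le.2 ⟨hx.1, hx.2⟩))
    (convex_Icc _ _) ⟨by simp, by simp⟩ ⟨neg_abs_le u, le_abs_self u⟩
  simpa [h0] using this

/-- Derivative of the difference between finite-volume and limiting function. -/
def dnF (β : ℝ) (ν : Measure ℝ) (h : ℕ → ℝ) (n : ℕ) (y : ℝ) : ℝ :=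
  β * Ft β ν y - β * ((1 / n) * ∑ i : Fin n, Real.tanh (β * (y + h i)))

lemma diff_hasDerivAt (β : ℝ) {ν : Measure ℝ} [IsProbabilityMeasure ν]
    (hmom : Integrable (fun x : ℝ => x ^ 2) ν) (h : ℕ → ℝ) (m : ℝ) (n : ℕ) (u : ℝ) :
    HasDerivAt (fun u => HnF β h m n u - (G β ν (m + u) - G β ν m)) (dnF β ν h n (m + u)) u := by
  have h1 : HasDerivAt (fun u => G β ν (m + u)) (β * (m + u) - β * Ft β ν (m + u)) u :=
    (G_hasDerivAt β hmom (m + u)).comp_const_add m u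
  have h2 : ∀ i : Fin n, HasDerivAt (fun u => Real.log (Real.cosh (β * (m + u + h i))))
      (Real.tanh (β * (m + u + h i)) * β) u := by
    intro i
    have h3 : HasDerivAt (fun u => β * (m + u + h i)) β u := by
      simpa using (((hasDerivAt_id u).const_add m).add_const (h i)).const_mul β
    exact (hasDerivAt_logcosh (β * (m + u + h i))).comp u h3
  have h4 : HasDerivAt (fun u => Gn β h n (m + u))
      (β * (m + u) - (1 / n) * ∑ i : Fin n, Real.tanh (β * (m + u + h i)) * β) u := by
    unfold Gn
    refine HasDerivAt.sub ?_ ((HasDerivAt.fun_sum fun i _ => h2 i).const_mul _)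
    have := ((((hasDerivAt_id u).const_add m).pow 2).const_mul (β / 2))
    refine this.congr_deriv ?_
    simp
    ring
  unfold HnF
  refine ((h4.sub_const _).sub (h1.sub_const _)).congr_deriv ?_
  rw [dnF, ← Finset.sum_mul]
  ring

lemma dnF_le (β : ℝ) (hβ : 0 < β) (ν : Measure ℝ) [IsProbabilityMeasure ν] (h : ℕ → ℝ) (n : ℕ)
    (y : ℝ) : |dnF β ν h n y| ≤ 2 * β := by
  have h1 := Ft_abs_le β ν y
  have h2 : |(1 / n : ℝ) * ∑ i : Fin n, Real.tanh (β * (y + h i))| ≤ 1 := by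
    rw [abs_mul, abs_of_nonneg (by positivity)]
    have h3 : |∑ i : Fin n, Real.tanh (β * (y + h i))| ≤ n := by
      refine (Finset.abs_sum_le_sum_abs _ _).trans ?_
      refine (Finset.sum_le_sum fun i _ => tanh_abs_le _).trans ?_
      simp
    rcases Nat.eq_zero_or_pos n with rfl | hn
    · simp
    · have hn0 : (0 : ℝ) < n := by exact_mod_cast hn
      calc _ ≤ (1 / n : ℝ) * n := by gcongr
        _ = 1 := by field_simp
  unfold dnF
  rw [← mul_sub, abs_mul, abs_of_pos hβ, mul_comm 2 β]
  refine mul_le_mul_of_nonneg_left ?_ hβ.le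
  refine (abs_sub _ _).trans ?_
  linarith

lemma dnF_Dn (β : ℝ) (hβ : 0 < β) (ν : Measure ℝ) [IsProbabilityMeasure ν] (h : ℕ → ℝ) (n : ℕ)
    (hn : 1 ≤ n) (y : ℝ) : |dnF β ν h n y| = β * |Dn β ν h n y| / n := by
  have hn0 : (0 : ℝ) < n := by exact_mod_cast hn
  have : dnF β ν h n y = -(β * Dn β ν h n y / n) := by
    rw [dnF, Dn, Finset.sum_sub_distrib]
    simp
    field_simp
    ring
  rw [this, abs_neg, abs_div, abs_mul, abs_of_pos hβ, abs_of_pos hn0]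

lemma lapHyp_of (β : ℝ) (hβ : 0 < β) (ν : Measure ℝ) [IsProbabilityMeasure ν]
    (hmom : Integrable (fun x : ℝ => x ^ 2) ν)
    (m : ℝ) (k : ℕ) (l : ℝ) (hmin : IsMinOfType β ν m k l)
    (hpure : ∀ x : ℝ, x ≠ m → G β ν m < G β ν x) (h : ℕ → ℝ)
    (hh : ∀ R ε : ℝ, 0 < ε → ∀ᶠ n : ℕ in atTop, ∀ u : ℝ, |u| ≤ R →
      |Dn β ν h n (m + u)| ≤ (n : ℝ) ^ (1 / 2 + ε)) :
    LapHyp (fun u => G β ν (m + u) - G β ν m) (HnF β h m) k (l / (Nat.factorial (2 * k)))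
      (β / 4) (β * (|m| + 1) ^ 2) (2 * β) where
  hk := hmin.1
  hκ := by have := hmin.2.1; positivity
  hc0 := by positivity
  hb0 := by positivity
  cont := by
    have : Continuous (G β ν) :=
      continuous_iff_continuousAt.2 fun y => (G_hasDerivAt β hmom y).continuousAt
    fun_prop
  zero := by simp
  pos := fun u hu => by
    have := hpure (m + u) (by simpa using hu)
    simpa using this
  tay := G_taylor β hmom m k l hmin
  grow := fun u => by
    have h1 := mvt_bound (fun u => G β ν (m + u) - G β ν m - β / 2 * ((m + u) ^ 2 - m ^ 2))
      (fun u => -(β * Ft β ν (m + u))) β u (by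
        intro v
        have e1 : HasDerivAt (fun u => G β ν (m + u)) (β * (m + v) - β * Ft β ν (m + v)) v :=
          (G_hasDerivAt β hmom (m + v)).comp_const_add m v
        have e2 := (((((hasDerivAt_id v).const_add m).pow 2).sub_const (m ^ 2)).const_mul (β / 2))
        refine ((e1.sub_const _).sub e2).congr_deriv ?_
        simp
        ring) (by simp) (by
        intro v _
        rw [abs_neg, abs_mul, abs_of_pos hβ]
        have := Ft_abs_le β ν (m + v)
        nlinarith)
    have h2 := (abs_le.1 h1).1
    have h3 : -(|m| * |u|) ≤ m * u := by rw [← abs_mul]; exact neg_abs_le _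
    have h4 : 0 ≤ β * (|u| / 2 - (|m| + 1)) ^ 2 := by positivity
    have h5 := sq_abs u
    have h6 := mul_le_mul_of_nonneg_left h3 hβ.le
    nlinarith
  far := fun n u => by
    exact mvt_bound _ _ (2 * β) u (fun v => diff_hasDerivAt β hmom h m n v) (by simp [HnF])
      (fun v _ => dnF_le β hβ ν h n _)
  near := fun R ε hε => by
    filter_upwards [hh R ε hε, eventually_ge_atTop 1] with n hn hn1 u hu
    have hn0 : (0 : ℝ) < n := by exact_mod_cast hn1
    have := mvt_bound _ _ (β * (n : ℝ) ^ (1 / 2 + ε) / n) u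
      (fun v => diff_hasDerivAt β hmom h m n v) (by simp [HnF])
      (fun v hv => by
        rw [dnF_Dn β hβ ν h n hn1]
        have := hn v (hv.trans hu)
        gcongr)
    calc (n : ℝ) * |HnF β h m n u - (G β ν (m + u) - G β ν m)|
        ≤ n * (β * (n : ℝ) ^ (1 / 2 + ε) / n * |u|) := by gcongr
      _ = β * (n : ℝ) ^ (1 / 2 + ε) * |u| := by field_simp
      _ ≤ 2 * β * (n : ℝ) ^ (1 / 2 + ε) * |u| := by
        gcongr; linarith
  int := fun n t hn => HnF_integrable β hβ h m n hn t
/-! ### Gärtner-Ellis for power rate functions -/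

/-- Hypotheses of the Gärtner-Ellis type lemma. -/
structure GEHyp (P : ℕ → Measure ℝ) (a : ℕ → ℝ) (k : ℕ) (K : ℝ) : Prop where
  prob : ∀ n, IsProbabilityMeasure (P n)
  hk : 1 ≤ k
  hK : 0 < K
  ha : Tendsto a atTop atTop
  int : ∀ n s, Integrable (fun y : ℝ => Real.exp (s * id y)) (P n)
  lim : ∀ x : ℝ, Tendsto (fun n => (a n)⁻¹ *
    Real.log (mgf id (P n) (a n * (2 * k * K * x ^ (2 * k - 1))))) atTop
    (𝓝 ((2 * k - 1) * K * x ^ (2 * k)))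

section GE

variable {P : ℕ → Measure ℝ} {a : ℕ → ℝ} {k : ℕ} {K : ℝ}

lemma GEHyp.bounds (L : GEHyp P a k K) (x ε : ℝ) (hε : 0 < ε) :
    ∀ᶠ n in atTop, 0 < a n ∧
      Real.exp (a n * ((2 * k - 1) * K * x ^ (2 * k) - ε)) ≤
        mgf id (P n) (a n * (2 * k * K * x ^ (2 * k - 1))) ∧
      mgf id (P n) (a n * (2 * k * K * x ^ (2 * k - 1))) ≤
        Real.exp (a n * ((2 * k - 1) * K * x ^ (2 * k) + ε)) := by
  filter_upwards [(L.lim x).eventually (Ioo_mem_nhds (sub_lt_self _ hε) (lt_add_of_pos_right _ hε)),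
    L.ha.eventually_gt_atTop 0] with n hn ha
  have := L.prob n
  set M := mgf id (P n) (a n * (2 * k * K * x ^ (2 * k - 1))) with hM
  have hM0 : 0 < M := mgf_pos (L.int n _)
  have h1 : a n * ((a n)⁻¹ * Real.log M) = Real.log M := by field_simp
  refine ⟨ha, ?_, ?_⟩
  · rw [← Real.le_log_iff_exp_le hM0, ← h1]
    exact mul_le_mul_of_nonneg_left hn.1.le ha.le
  · rw [← Real.log_le_iff_le_exp hM0, ← h1]
    exact mul_le_mul_of_nonneg_left hn.2.le ha.le

lemma odd_pow_mul (k : ℕ) (hk : 1 ≤ k) (x : ℝ) : x ^ (2 * k - 1) * x = x ^ (2 * k) := by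
  rw [← pow_succ]; congr 1; omega

lemma odd_two_sub (k : ℕ) (hk : 1 ≤ k) : Odd (2 * k - 1) :=
  ⟨k - 1, by omega⟩

lemma GEHyp.upper_real (L : GEHyp P a k K) (x ε : ℝ) (hx : 0 ≤ x) (hε : 0 < ε) :
    ∀ᶠ n in atTop, (P n).real {y | x ≤ |y|} ≤ 2 * Real.exp (a n * (-(K * x ^ (2 * k)) + ε)) := by
  filter_upwards [L.bounds x ε hε, L.bounds (-x) ε hε] with n h1 h2
  have := L.prob n
  have hK := L.hK
  obtain ⟨ha, -, h1⟩ := h1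
  obtain ⟨-, -, h2⟩ := h2
  have hθ : 0 ≤ a n * (2 * k * K * x ^ (2 * k - 1)) := by positivity
  rw [(odd_two_sub k L.hk).neg_pow, (even_two_mul k).neg_pow] at h2
  have c1 := measure_ge_le_exp_mul_mgf (X := id) (μ := P n) x hθ (L.int n _)
  have c2 := measure_le_le_exp_mul_mgf (X := id) (μ := P n)
    (t := a n * (2 * k * K * -x ^ (2 * k - 1))) (-x) (by linarith) (L.int n _)
  have hsub : {y : ℝ | x ≤ |y|} ⊆ {y : ℝ | x ≤ id y} ∪ {y : ℝ | id y ≤ -x} := by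
    intro y hy
    rcases le_abs.1 (show x ≤ |y| from hy) with h | h
    · exact Or.inl h
    · exact Or.inr (show y ≤ -x by linarith)
  have e0 := odd_pow_mul k L.hk x
  have e1 : ∀ M : ℝ, M ≤ Real.exp (a n * ((2 * k - 1) * K * x ^ (2 * k) + ε)) →
      Real.exp (-(a n * (2 * k * K * x ^ (2 * k - 1))) * x) * M ≤
        Real.exp (a n * (-(K * x ^ (2 * k)) + ε)) := by
    intro M hM
    refine (mul_le_mul_of_nonneg_left hM (Real.exp_pos _).le).trans (le_of_eq ?_)
    rw [← Real.exp_add]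
    congr 1
    rw [← e0]
    ring
  have d1 := c1.trans (e1 _ h1)
  have d2 := e1 _ h2
  rw [show -(a n * (2 * k * K * x ^ (2 * k - 1))) * x =
    -(a n * (2 * k * K * -x ^ (2 * k - 1))) * -x by ring] at d2
  have d3 := c2.trans d2
  calc (P n).real {y | x ≤ |y|} ≤ (P n).real ({y : ℝ | x ≤ id y} ∪ {y : ℝ | id y ≤ -x}) :=
        measureReal_mono hsub
    _ ≤ _ := measureReal_union_le _ _
    _ ≤ _ := by linarith

lemma GEHyp.side (L : GEHyp P a k K) (x z : ℝ) (hxz : x ≠ z) :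
    ∀ᶠ n in atTop,
      Real.exp (a n * ((2 * k * K * x ^ (2 * k - 1) - 2 * k * K * z ^ (2 * k - 1)) * z)) *
        mgf id (P n) (a n * (2 * k * K * z ^ (2 * k - 1))) ≤
      1 / 4 * mgf id (P n) (a n * (2 * k * K * x ^ (2 * k - 1))) := by
  have hK := L.hK
  set gap := K * (z ^ (2 * k) + (2 * (k : ℝ) - 1) * x ^ (2 * k) - 2 * (k : ℝ) * x ^ (2 * k - 1) * z)
    with hgap
  have hg : 0 < gap := mul_pos hK (by linarith [tangent_pow_strict k L.hk x z hxz])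
  have t1 : Tendsto (fun n => Real.exp (-(a n * (gap / 2)))) atTop (𝓝 0) :=
    Real.tendsto_exp_neg_atTop_nhds_zero.comp (L.ha.atTop_mul_const (by positivity))
  filter_upwards [L.bounds x (gap / 4) (by positivity), L.bounds z (gap / 4) (by positivity),
    t1.eventually (gt_mem_nhds (show (0 : ℝ) < 1 / 4 by norm_num))] with n h1 h2 h3
  have e0 := odd_pow_mul k L.hk z
  calc _ ≤ Real.exp (a n * ((2 * k * K * x ^ (2 * k - 1) - 2 * k * K * z ^ (2 * k - 1)) * z)) *
        Real.exp (a n * ((2 * k - 1) * K * z ^ (2 * k) + gap / 4)) := by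
        gcongr; exact h2.2.2
    _ = Real.exp (-(a n * (gap / 2))) *
        Real.exp (a n * ((2 * k - 1) * K * x ^ (2 * k) - gap / 4)) := by
        rw [← Real.exp_add, ← Real.exp_add]
        congr 1
        rw [hgap, ← e0]
        ring
    _ ≤ _ := by
        gcongr
        exact h1.2.1

lemma GEHyp.lower_real (L : GEHyp P a k K) (x δ ε : ℝ) (hδ : 0 < δ) (hε : 0 < ε) :
    ∀ᶠ n in atTop, 1 / 2 * Real.exp (a n * (-(K * x ^ (2 * k)) - ε -
      |2 * k * K * x ^ (2 * k - 1)| * δ)) ≤ (P n).real (Metric.ball x δ) := by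
  have hK := L.hK
  filter_upwards [L.bounds x ε hε, L.side x (x + δ) (by linarith), L.side x (x - δ) (by linarith)]
    with n h1 h2 h3
  have := L.prob n
  obtain ⟨ha, h1, -⟩ := h1
  have hmono := (Odd.strictMono_pow (R := ℝ) (odd_two_sub k L.hk)).monotone
  have m1 : x ^ (2 * k - 1) ≤ (x + δ) ^ (2 * k - 1) := hmono (by linarith)
  have m2 : (x - δ) ^ (2 * k - 1) ≤ x ^ (2 * k - 1) := hmono (by linarith)
  have hkK : 0 ≤ 2 * (k : ℝ) * K := by positivity
  have m1' := mul_le_mul_of_nonneg_left m1 hkK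
  have m2' := mul_le_mul_of_nonneg_left m2 hkK
  have e0 := odd_pow_mul k L.hk x
  set θ := 2 * k * K * x ^ (2 * k - 1) with hθ
  set θ1 := 2 * k * K * (x + δ) ^ (2 * k - 1) with hθ1
  set θ2 := 2 * k * K * (x - δ) ^ (2 * k - 1) with hθ2
  have hpt : ∀ y : ℝ, Real.exp (a n * θ * id y) ≤
      (Metric.ball x δ).indicator (fun _ => Real.exp (a n * (θ * x + |θ| * δ))) y +
      (Real.exp (a n * ((θ - θ1) * (x + δ))) * Real.exp (a n * θ1 * id y) +
       Real.exp (a n * ((θ - θ2) * (x - δ))) * Real.exp (a n * θ2 * id y)) := by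
    intro y
    simp only [id]
    have p1 : 0 ≤ Real.exp (a n * ((θ - θ1) * (x + δ))) * Real.exp (a n * θ1 * y) := by positivity
    have p2 : 0 ≤ Real.exp (a n * ((θ - θ2) * (x - δ))) * Real.exp (a n * θ2 * y) := by positivity
    have p3 : 0 ≤ (Metric.ball x δ).indicator (fun _ => Real.exp (a n * (θ * x + |θ| * δ))) y :=
      Set.indicator_nonneg (fun _ _ => (Real.exp_pos _).le) _
    by_cases hy : y ∈ Metric.ball x δ
    · rw [Set.indicator_of_mem hy]
      have : Real.exp (a n * θ * y) ≤ Real.exp (a n * (θ * x + |θ| * δ)) := by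
        rw [Real.exp_le_exp, mul_assoc]
        refine mul_le_mul_of_nonneg_left ?_ ha.le
        have hy' : |y - x| < δ := by simpa [Real.dist_eq] using hy
        have q1 : θ * (y - x) ≤ |θ| * |y - x| := by rw [← abs_mul]; exact le_abs_self _
        have q2 := mul_le_mul_of_nonneg_left hy'.le (abs_nonneg θ)
        linarith
      linarith
    · rw [Metric.mem_ball, Real.dist_eq, not_lt, le_abs] at hy
      rcases hy with hy | hy
      · have : Real.exp (a n * θ * y) ≤
            Real.exp (a n * ((θ - θ1) * (x + δ))) * Real.exp (a n * θ1 * y) := by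
          rw [← Real.exp_add, Real.exp_le_exp]
          have : 0 ≤ a n * ((θ1 - θ) * (y - (x + δ))) :=
            mul_nonneg ha.le (mul_nonneg (by linarith) (by linarith))
          linarith
        linarith
      · have : Real.exp (a n * θ * y) ≤
            Real.exp (a n * ((θ - θ2) * (x - δ))) * Real.exp (a n * θ2 * y) := by
          rw [← Real.exp_add, Real.exp_le_exp]
          have : 0 ≤ a n * ((θ - θ2) * ((x - δ) - y)) :=
            mul_nonneg ha.le (mul_nonneg (by linarith) (by linarith))
          linarith
        linarith
  have hi1 : Integrable ((Metric.ball x δ).indicator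
      (fun _ : ℝ => Real.exp (a n * (θ * x + |θ| * δ)))) (P n) :=
    (integrable_const _).indicator measurableSet_ball
  have hi2 := (L.int n (a n * θ1)).const_mul (Real.exp (a n * ((θ - θ1) * (x + δ))))
  have hi3 := (L.int n (a n * θ2)).const_mul (Real.exp (a n * ((θ - θ2) * (x - δ))))
  have hI := integral_mono (L.int n (a n * θ)) (hi1.add (hi2.add hi3)) hpt
  have hI2 : mgf id (P n) (a n * θ) ≤
      (P n).real (Metric.ball x δ) * Real.exp (a n * (θ * x + |θ| * δ)) +
      (Real.exp (a n * ((θ - θ1) * (x + δ))) * mgf id (P n) (a n * θ1) +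
       Real.exp (a n * ((θ - θ2) * (x - δ))) * mgf id (P n) (a n * θ2)) := by
    refine hI.trans (le_of_eq ?_)
    have s1 := integral_add hi1 (hi2.add hi3)
    have s2 := integral_add hi2 hi3
    simp only [Pi.add_apply] at s1
    refine s1.trans ?_
    rw [s2, integral_const_mul, integral_const_mul, integral_indicator_const _ measurableSet_ball]
    rfl
  have hfin : 1 / 2 * Real.exp (a n * ((2 * k - 1) * K * x ^ (2 * k) - ε)) ≤
      (P n).real (Metric.ball x δ) * Real.exp (a n * (θ * x + |θ| * δ)) := by linarith
  rw [← div_le_iff₀ (Real.exp_pos (a n * (θ * x + |θ| * δ))), mul_div_assoc, ← Real.exp_sub] at hfin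
  refine (le_of_eq ?_).trans hfin
  congr 2
  have : θ * x = 2 * k * K * x ^ (2 * k) := by rw [hθ, ← e0]; ring
  rw [this]
  ring

lemma elog_le {x : ℝ≥0∞} {r : ℝ} (hr : 0 < r) (h : x ≤ ENNReal.ofReal r) :
    elog x ≤ ((Real.log r : ℝ) : EReal) := by
  have hx : x ≠ ⊤ := (h.trans_lt ENNReal.ofReal_lt_top).ne
  unfold elog
  split_ifs with h0
  · exact bot_le
  · rw [EReal.coe_le_coe_iff]
    exact Real.log_le_log (ENNReal.toReal_pos h0 hx) (ENNReal.toReal_le_of_le_ofReal hr.le h)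

lemma le_elog {x : ℝ≥0∞} {r : ℝ} (hr : 0 < r) (h : ENNReal.ofReal r ≤ x) :
    ((Real.log r : ℝ) : EReal) ≤ elog x := by
  have h0 : x ≠ 0 := ((ENNReal.ofReal_pos.2 hr).trans_le h).ne'
  unfold elog
  rw [if_neg h0]
  split_ifs with hx
  · exact le_top
  · rw [EReal.coe_le_coe_iff]
    refine Real.log_le_log hr ?_
    exact (ENNReal.ofReal_le_iff_le_toReal hx).1 h

lemma coe_ofReal_nonneg {r : ℝ} (hr : 0 ≤ r) : ((ENNReal.ofReal r : ℝ≥0∞) : EReal) = (r : EReal) := by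
  rw [EReal.coe_ennreal_ofReal, max_eq_left hr]

theorem GEHyp.hasLDP (L : GEHyp P a k K) :
    HasLDP P a (fun x => ENNReal.ofReal (K * x ^ (2 * k))) := by
  have hK := L.hK
  have hk0 : 2 * k ≠ 0 := by have := L.hk; omega
  have hI0 : ∀ x : ℝ, 0 ≤ K * x ^ (2 * k) := fun x =>
    mul_nonneg hK.le ((even_two_mul k).pow_nonneg x)
  have hcont : Continuous (fun x : ℝ => ENNReal.ofReal (K * x ^ (2 * k))) :=
    ENNReal.continuous_ofReal.comp (by fun_prop)
  refine ⟨hcont.lowerSemicontinuous, ?_, ?_⟩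
  · intro c
    refine Metric.isCompact_of_isClosed_isBounded (isClosed_le hcont continuous_const) ?_
    refine (Metric.isBounded_closedBall (x := (0 : ℝ)) (r := 1 + max c 0 / K)).subset ?_
    intro x hx
    have hx' : ENNReal.ofReal (K * x ^ (2 * k)) ≤ ENNReal.ofReal c := hx
    have h1 : K * x ^ (2 * k) ≤ max c 0 := by
      have := ENNReal.toReal_mono ENNReal.ofReal_ne_top hx'
      rwa [ENNReal.toReal_ofReal (hI0 x), ENNReal.toReal_ofReal'] at this
    rw [mem_closedBall_zero_iff, Real.norm_eq_abs]
    have h2 : x ^ (2 * k) ≤ max c 0 / K := by rw [le_div_iff₀ hK]; linarith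
    have h0 : 0 ≤ max c 0 / K := by positivity
    by_contra hlt
    push Not at hlt
    have h3 : 1 ≤ |x| := by linarith
    have h4 : |x| ≤ |x| ^ (2 * k) := le_self_pow₀ h3 hk0
    rw [(even_two_mul k).pow_abs] at h4
    linarith
  · intro C hC
    constructor
    · rw [EReal.neg_le]
      refine le_iInf₂ fun x hx => ?_
      rw [EReal.neg_le, coe_ofReal_nonneg (hI0 x), ← EReal.coe_neg,
        ← EReal.ge_of_forall_gt_iff_ge]
      intro c hc
      rw [EReal.coe_lt_coe_iff] at hc
      refine le_liminf_of_le (by isBoundedDefault) ?_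
      obtain ⟨r, hr, hball⟩ := Metric.isOpen_iff.1 isOpen_interior x hx
      set ε := (-(K * x ^ (2 * k)) - c) / 3 with hε_def
      have hε : 0 < ε := by rw [hε_def]; linarith
      set θ := |2 * k * K * x ^ (2 * k - 1)| with hθ
      have hθ0 : 0 ≤ θ := abs_nonneg _
      set δ := min r (ε / (θ + 1)) with hδ_def
      have hδ : 0 < δ := lt_min hr (by positivity)
      have hθδ : θ * δ ≤ ε := by
        have h1 : δ ≤ ε / (θ + 1) := min_le_right _ _
        rw [le_div_iff₀ (by positivity)] at h1
        nlinarith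
      have t1 : Tendsto (fun n => Real.log (1 / 2) / a n) atTop (𝓝 0) := L.ha.const_div_atTop _
      filter_upwards [L.lower_real x δ ε hδ hε, L.ha.eventually_gt_atTop 0,
        t1.eventually (lt_mem_nhds (show -ε < 0 by linarith))] with n h1 ha h2
      have := L.prob n
      rw [← hθ] at h1
      have hle : ENNReal.ofReal (1 / 2 * Real.exp (a n * (-(K * x ^ (2 * k)) - ε - θ * δ)))
          ≤ P n C := by
        refine (ENNReal.ofReal_le_ofReal h1).trans ?_
        rw [ofReal_measureReal]
        refine measure_mono ?_
        exact ((Metric.ball_subset_ball (min_le_left _ _)).trans hball).trans interior_subset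
      have h3 := le_elog (by positivity) hle
      have h4 := mul_le_mul_of_nonneg_left h3
        (show (0 : EReal) ≤ (((a n)⁻¹ : ℝ) : EReal) by exact_mod_cast (inv_pos.2 ha).le)
      refine le_trans ?_ h4
      rw [← EReal.coe_mul, EReal.coe_le_coe_iff, Real.log_mul (by norm_num) (Real.exp_pos _).ne',
        Real.log_exp, mul_add]
      have h5 : (a n)⁻¹ * (a n * (-(K * x ^ (2 * k)) - ε - θ * δ)) =
        -(K * x ^ (2 * k)) - ε - θ * δ := by field_simp
      rw [h5]
      have h6 : (a n)⁻¹ * Real.log (1 / 2) = Real.log (1 / 2) / a n := by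
        rw [div_eq_inv_mul (Real.log _)]
      rw [h6]
      linarith
    · rcases C.eq_empty_or_nonempty with rfl | hne
      · refine le_trans (b := ⊥) ?_ bot_le
        refine limsup_le_of_le (by isBoundedDefault) ?_
        filter_upwards [L.ha.eventually_gt_atTop 0] with n ha
        rw [measure_empty, elog, if_pos rfl, EReal.coe_mul_bot_of_pos (inv_pos.2 ha)]
      · obtain ⟨y0, hy0, hdist⟩ := isClosed_closure.exists_infDist_eq_dist hne.closure (0 : ℝ)
        refine le_trans (b := -((ENNReal.ofReal (K * y0 ^ (2 * k)) : ℝ≥0∞) : EReal)) ?_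
          (EReal.neg_le_neg_iff.2 (iInf₂_le y0 hy0))
        rw [coe_ofReal_nonneg (hI0 y0), ← EReal.coe_neg, ← EReal.le_of_forall_lt_iff_le]
        intro c hc
        rw [EReal.coe_lt_coe_iff] at hc
        refine limsup_le_of_le (by isBoundedDefault) ?_
        set ε := (c + K * y0 ^ (2 * k)) / 2 with hε_def
        have hε : 0 < ε := by rw [hε_def]; linarith
        have t1 : Tendsto (fun n => Real.log 2 / a n) atTop (𝓝 0) := L.ha.const_div_atTop _
        filter_upwards [L.upper_real |y0| ε (abs_nonneg _) hε, L.ha.eventually_gt_atTop 0,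
          t1.eventually (gt_mem_nhds hε)] with n h1 ha h2
        have := L.prob n
        rw [(even_two_mul k).pow_abs] at h1
        have hsub : C ⊆ {y | |y0| ≤ |y|} := by
          intro y hy
          have := Metric.infDist_le_dist_of_mem (x := (0 : ℝ)) (subset_closure hy)
          rw [hdist] at this
          simpa [Real.dist_eq] using this
        have hle : P n C ≤ ENNReal.ofReal (2 * Real.exp (a n * (-(K * y0 ^ (2 * k)) + ε))) := by
          refine (measure_mono hsub).trans ?_
          rw [← ofReal_measureReal]
          exact ENNReal.ofReal_le_ofReal h1
        have h3 := elog_le (by positivity) hle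
        have h4 := mul_le_mul_of_nonneg_left h3
          (show (0 : EReal) ≤ (((a n)⁻¹ : ℝ) : EReal) by exact_mod_cast (inv_pos.2 ha).le)
        refine h4.trans ?_
        rw [← EReal.coe_mul, EReal.coe_le_coe_iff, Real.log_mul (by norm_num) (Real.exp_pos _).ne',
          Real.log_exp, mul_add]
        have h5 : (a n)⁻¹ * (a n * (-(K * y0 ^ (2 * k)) + ε)) = -(K * y0 ^ (2 * k)) + ε := by
          field_simp
        rw [h5]
        have h6 : (a n)⁻¹ * Real.log 2 = Real.log 2 / a n := by
          rw [div_eq_inv_mul]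
        rw [h6]
        linarith

end GE
/-! ### Final assembly -/

lemma gibbsWeight_pos (β : ℝ) (h : ℕ → ℝ) (n : ℕ) (σ : Fin n → Bool) :
    0 < gibbsWeight β h n σ := Real.exp_pos _

lemma gibbsZ_pos (β : ℝ) (h : ℕ → ℝ) (n : ℕ) :
    0 < ∑ σ : Fin n → Bool, gibbsWeight β h n σ :=
  Finset.sum_pos (fun σ _ => gibbsWeight_pos β h n σ) Finset.univ_nonempty

instance gibbs_prob (β : ℝ) (h : ℕ → ℝ) (n : ℕ) : IsProbabilityMeasure (gibbsMeasure β h n) := by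
  constructor
  unfold gibbsMeasure
  have hZ := gibbsZ_pos β h n
  simp only [Measure.smul_apply, Measure.finsetSum_apply, smul_eq_mul, measure_univ, mul_one]
  rw [← ENNReal.ofReal_sum_of_nonneg (fun σ _ => (gibbsWeight_pos β h n σ).le)]
  exact ENNReal.inv_mul_cancel (ENNReal.ofReal_pos.2 hZ).ne' ENNReal.ofReal_ne_top

lemma gibbs_integral (β : ℝ) (h : ℕ → ℝ) (n : ℕ) (f : (Fin n → Bool) → ℝ) :
    ∫ σ, f σ ∂(gibbsMeasure β h n) =
      (∑ σ : Fin n → Bool, gibbsWeight β h n σ)⁻¹ * ∑ σ : Fin n → Bool, gibbsWeight β h n σ * f σ := by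
  have hZ := gibbsZ_pos β h n
  unfold gibbsMeasure
  rw [integral_smul_measure, integral_finsetSum_measure]
  · rw [ENNReal.toReal_inv, ENNReal.toReal_ofReal hZ.le, smul_eq_mul]
    congr 1
    refine Finset.sum_congr rfl fun σ _ => ?_
    rw [integral_smul_measure, integral_dirac, ENNReal.toReal_ofReal (gibbsWeight_pos β h n σ).le,
      smul_eq_mul]
  · intro σ _
    exact (Integrable.of_finite (μ := Measure.dirac σ)).smul_measure ENNReal.ofReal_ne_top

lemma log_mgf_eq (β : ℝ) (hβ : 0 < β) (h : ℕ → ℝ) (m α γ θ : ℝ) (n : ℕ) (hn : 1 ≤ n) :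
    ((n : ℝ) ^ γ)⁻¹ * Real.log (mgf id ((gibbsMeasure β h n).map
      (fun σ => (mag σ - n * m) / (n : ℝ) ^ α)) ((n : ℝ) ^ γ * θ)) =
    ((n : ℝ) ^ γ)⁻¹ * Real.log (lapInt (HnF β h m) n (θ * (n : ℝ) ^ γ / (n : ℝ) ^ α)) -
      ((n : ℝ) ^ γ)⁻¹ * Real.log (lapInt (HnF β h m) n 0) -
      θ ^ 2 / (2 * β) * (n : ℝ) ^ (1 + γ - 2 * α) := by
  have hn0 : (0 : ℝ) < n := by exact_mod_cast hn
  obtain ⟨c, hc, hub⟩ := hubbard β hβ h m n hn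
  have hpos : ∀ t, 0 < lapInt (HnF β h m) n t := by
    intro t
    have h1 : 0 < ∑ σ : Fin n → Bool, gibbsWeight β h n σ * Real.exp (t * (mag σ - n * m)) :=
      Finset.sum_pos (fun σ _ => mul_pos (gibbsWeight_pos β h n σ) (Real.exp_pos _))
        Finset.univ_nonempty
    rw [hub t] at h1
    exact pos_of_mul_pos_right h1 (by positivity)
  set a := (n : ℝ) ^ γ with ha
  have ha0 : 0 < a := by positivity
  set t := θ * a / (n : ℝ) ^ α with ht
  have hZ : ∑ σ : Fin n → Bool, gibbsWeight β h n σ = c * lapInt (HnF β h m) n 0 := by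
    have := hub 0
    simpa using this
  have hmgf : mgf id ((gibbsMeasure β h n).map (fun σ => (mag σ - n * m) / (n : ℝ) ^ α)) (a * θ) =
      (lapInt (HnF β h m) n 0)⁻¹ * (Real.exp (-(n * t ^ 2 / (2 * β))) * lapInt (HnF β h m) n t) := by
    rw [mgf_id_map (measurable_of_finite _).aemeasurable, mgf, gibbs_integral, hZ]
    have : ∀ σ : Fin n → Bool, gibbsWeight β h n σ *
        Real.exp (a * θ * ((mag σ - n * m) / (n : ℝ) ^ α)) =
        gibbsWeight β h n σ * Real.exp (t * (mag σ - n * m)) := by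
      intro σ
      congr 2
      rw [ht]
      ring
    rw [Finset.sum_congr rfl fun σ _ => this σ, hub t]
    have := (hpos 0).ne'
    field_simp
  have hsq : a⁻¹ * (n * t ^ 2 / (2 * β)) = θ ^ 2 / (2 * β) * (n : ℝ) ^ (1 + γ - 2 * α) := by
    rw [Real.rpow_sub hn0, Real.rpow_add hn0, Real.rpow_one, ← ha,
      show 2 * α = α + α by ring, Real.rpow_add hn0, ht]
    field_simp
  rw [hmgf, Real.log_mul (inv_ne_zero (hpos 0).ne') (mul_pos (Real.exp_pos _) (hpos t)).ne',
    Real.log_inv, Real.log_mul (Real.exp_pos _).ne' (hpos t).ne', Real.log_exp, ← hsq]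
  ring

lemma log_mgf_tendsto (β : ℝ) (hβ : 0 < β) (h : ℕ → ℝ) (m : ℝ) {H : ℝ → ℝ} {k : ℕ}
    {κ c0 B b : ℝ} (L : LapHyp H (HnF β h m) k κ c0 B b) (α : ℝ)
    (hα : 1 - 1 / (2 * (2 * (k : ℝ) - 1)) < α) (hα1 : α < 1) (x : ℝ) :
    Tendsto (fun n : ℕ => ((n : ℝ) ^ (1 - 2 * (k : ℝ) * (1 - α)))⁻¹ *
      Real.log (mgf id ((gibbsMeasure β h n).map
        (fun σ => (mag σ - n * m) / (n : ℝ) ^ α))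
        ((n : ℝ) ^ (1 - 2 * (k : ℝ) * (1 - α)) * (2 * k * κ * x ^ (2 * k - 1))))) atTop
      (𝓝 ((2 * k - 1) * κ * x ^ (2 * k) -
        (2 * k * κ * x ^ (2 * k - 1)) ^ 2 / (2 * β) * (if k = 1 then 1 else 0))) := by
  have hk := L.hk
  have t1 := L.tendsto α hα hα1 x
  have t2 := L.tendsto α hα hα1 0
  have z1 : (0 : ℝ) ^ (2 * k - 1) = 0 := zero_pow (by omega)
  have z2 : (0 : ℝ) ^ (2 * k) = 0 := zero_pow (by omega)
  rw [z1, z2] at t2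
  simp only [mul_zero, zero_mul, zero_div] at t2
  have t3 : Tendsto (fun n : ℕ => (n : ℝ) ^ (1 + (1 - 2 * (k : ℝ) * (1 - α)) - 2 * α)) atTop
      (𝓝 (if k = 1 then 1 else 0)) := by
    split_ifs with h1
    · subst h1
      have : (1 + (1 - 2 * ((1 : ℕ) : ℝ) * (1 - α)) - 2 * α) = 0 := by push_cast; ring
      rw [this]
      simp
    · have hk2 : (2 : ℝ) ≤ k := by
        have : 2 ≤ k := by omega
        exact_mod_cast this
      have : (1 + (1 - 2 * (k : ℝ) * (1 - α)) - 2 * α) = -((2 * k - 2) * (1 - α)) := by ring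
      rw [this]
      exact (tendsto_rpow_neg_atTop (mul_pos (by linarith) (by linarith))).comp
        tendsto_natCast_atTop_atTop
  have t4 := (t1.sub t2).sub (t3.const_mul ((2 * k * κ * x ^ (2 * k - 1)) ^ 2 / (2 * β)))
  rw [sub_zero] at t4
  refine t4.congr' ?_
  filter_upwards [eventually_ge_atTop 1] with n hn
  exact (log_mgf_eq β hβ h m α _ _ n hn).symm

lemma geHyp_of (β : ℝ) (hβ : 0 < β) (h : ℕ → ℝ) (m : ℝ) {H : ℝ → ℝ} {k : ℕ}
    {κ c0 B b : ℝ} (L : LapHyp H (HnF β h m) k κ c0 B b) (α : ℝ)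
    (hα : 1 - 1 / (2 * (2 * (k : ℝ) - 1)) < α) (K : ℝ) (hK : 0 < K)
    (hlim : ∀ x : ℝ, Tendsto (fun n : ℕ => ((n : ℝ) ^ (1 - 2 * (k : ℝ) * (1 - α)))⁻¹ *
      Real.log (mgf id ((gibbsMeasure β h n).map
        (fun σ => (mag σ - n * m) / (n : ℝ) ^ α))
        ((n : ℝ) ^ (1 - 2 * (k : ℝ) * (1 - α)) * (2 * k * K * x ^ (2 * k - 1))))) atTop
      (𝓝 ((2 * k - 1) * K * x ^ (2 * k)))) :
    GEHyp (fun n => (gibbsMeasure β h n).map (fun σ => (mag σ - n * m) / (n : ℝ) ^ α))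
      (fun n => (n : ℝ) ^ (1 - 2 * (k : ℝ) * (1 - α))) k K where
  prob := fun n => Measure.isProbabilityMeasure_map (measurable_of_finite _).aemeasurable
  hk := L.hk
  hK := hK
  ha := (tendsto_rpow_atTop (gamma_pos k L.hk α hα)).comp tendsto_natCast_atTop_atTop
  int := fun n s => by
    rw [integrable_map_measure (Continuous.aestronglyMeasurable (by fun_prop))
      (measurable_of_finite _).aemeasurable]
    exact Integrable.of_finite
  lim := hlim
/-- MDP, unconditioned version (Theorem 3.4 of the paper). -/
theorem mdp_unconditioned_version
    (β : ℝ) (hβ : 0 < β) (ν : Measure ℝ) [IsProbabilityMeasure ν]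
    (hmom : Integrable (fun x : ℝ => x ^ 2) ν)
    (μ : Measure (ℕ → ℝ)) [IsProbabilityMeasure μ] (hμ : IsProductMeasure ν μ)
    (m : ℝ) (k : ℕ) (l : ℝ) (hmin : IsMinOfType β ν m k l)
    (hpure : ∀ x : ℝ, x ≠ m → G β ν m < G β ν x) :
    ∀ᵐ h ∂μ, ∀ α : ℝ, 1 - 1 / (2 * (2 * (k : ℝ) - 1)) < α → α < 1 →
      HasLDP
        (fun n => (gibbsMeasure β h n).map (fun σ => (mag σ - n * m) / (n : ℝ) ^ α))
        (fun n => (n : ℝ) ^ (1 - 2 * (k : ℝ) * (1 - α)))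
        (mdpRate β l k) := by
  filter_upwards [Dn_ae β hβ ν μ hμ m] with h hh α hα hα1
  have L := lapHyp_of β hβ ν hmom m k l hmin hpure h hh
  have hl := hmin.2.1
  by_cases hk1 : k = 1
  · subst hk1
    have hlβ : l < β := by
      rw [← hmin.2.2.2]
      exact strength_lt β hβ hmom m
    have hσ : 0 < l⁻¹ - β⁻¹ := sub_pos.2 (inv_strictAnti₀ hl hlβ)
    have hK : 0 < 1 / (2 * (l⁻¹ - β⁻¹)) := by positivity
    have hrate : mdpRate β l 1 =
        fun x => ENNReal.ofReal (1 / (2 * (l⁻¹ - β⁻¹)) * x ^ (2 * 1)) := by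
      funext x
      rw [mdpRate, if_pos rfl]
      congr 1
      ring
    rw [hrate]
    refine (geHyp_of β hβ h m L α hα _ hK fun x => ?_).hasLDP
    set s := l⁻¹ - β⁻¹ with hs
    have ht := log_mgf_tendsto β hβ h m L α hα hα1 (x / s / l)
    have e1 : 2 * ((1 : ℕ) : ℝ) * (l / (Nat.factorial (2 * 1))) * (x / s / l) ^ (2 * 1 - 1) =
        2 * ((1 : ℕ) : ℝ) * (1 / (2 * s)) * x ^ (2 * 1 - 1) := by
      norm_num [Nat.factorial]
      field_simp
    rw [e1] at ht
    have e2 : (2 * ((1 : ℕ) : ℝ) - 1) * (l / (Nat.factorial (2 * 1))) * (x / s / l) ^ (2 * 1) -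
        (2 * ((1 : ℕ) : ℝ) * (1 / (2 * s)) * x ^ (2 * 1 - 1)) ^ 2 / (2 * β) *
          (if 1 = 1 then 1 else 0) = (2 * ((1 : ℕ) : ℝ) - 1) * (1 / (2 * s)) * x ^ (2 * 1) := by
      have e3 : (2 * ((1 : ℕ) : ℝ) - 1) * (1 / (2 * s)) * x ^ (2 * 1) =
          s * (x ^ 2 / (2 * s ^ 2)) := by
        norm_num
        field_simp
      rw [e3]
      nth_rw 3 [hs]
      norm_num [Nat.factorial]
      field_simp
    rw [e2] at ht
    exact ht
  · have hrate : mdpRate β l k =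
        fun x => ENNReal.ofReal (l / (Nat.factorial (2 * k)) * x ^ (2 * k)) := by
      funext x
      rw [mdpRate, if_neg hk1]
      congr 1
      ring
    rw [hrate]
    refine (geHyp_of β hβ h m L α hα _ (by positivity) fun x => ?_).hasLDP
    have ht := log_mgf_tendsto β hβ h m L α hα hα1 x
    rw [if_neg hk1, mul_zero, sub_zero] at ht
    exact ht
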